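/- arXiv:1911.04277 — 10 statements merged into one kernel-verified Lean document; each statement's English description precedes it below -/
import Mathlib

section
/- Let G be a finite simple undirected graph with no isolated vertices admitting a split partition (K, I) where K is a clique, I is an independent set, and every vertex of K has at least one neighbor in I. If |I| = 2 and |K| is odd, then G is equimatchable. -/
open Finset

variable {V : Type*}

/-- A matching of `G`: a set of edges of `G` that are pairwise disjoint. -/
def IsMatching (G : SimpleGraph V) (M : Finset (Sym2 V)) : Prop :=
  (↑M : Set (Sym2 V)) ⊆ G.edgeSet ∧
    ∀ e ∈ M, ∀ f ∈ M, e ≠ f → ∀ v : V, v ∈ e → v ∉ f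

/-- A maximal matching of `G`: a matching such that every edge of `G` shares an
endpoint with some edge of the matching. -/
def IsMaximalMatching (G : SimpleGraph V) (M : Finset (Sym2 V)) : Prop :=
  IsMatching G M ∧ ∀ e ∈ G.edgeSet, ∃ f ∈ M, ∃ v : V, v ∈ e ∧ v ∈ f

/-- `G` is equimatchable if all maximal matchings have the same cardinality. -/
def Equimatchable (G : SimpleGraph V) : Prop :=
  ∀ M₁ M₂ : Finset (Sym2 V), IsMaximalMatching G M₁ → IsMaximalMatching G M₂ →
    M₁.card = M₂.card

/-- An independent set: a set of pairwise non-adjacent vertices. -/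
def IsIndepSet (G : SimpleGraph V) (s : Set V) : Prop :=
  s.Pairwise fun a b => ¬ G.Adj a b

/-- A split graph: the vertex set can be partitioned into a clique and an
independent set. -/
def IsSplitGraph (G : SimpleGraph V) : Prop :=
  ∃ K I : Set V, Disjoint K I ∧ K ∪ I = Set.univ ∧ G.IsClique K ∧ IsIndepSet G I

theorem aux_card {V : Type*} [Fintype V] [DecidableEq V]
    (G : SimpleGraph V)
    (K I : Finset V)
    (hdisj : Disjoint K I) (hcover : K ∪ I = Finset.univ)
    (hclique : G.IsClique (K : Set V))
    (hKI : ∀ k ∈ K, ∃ i ∈ I, G.Adj k i)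
    (hI2 : I.card = 2) (hKodd : Odd K.card)
    (M : Finset (Sym2 V)) (hM : IsMaximalMatching G M) : 2 * M.card = K.card + 1 := by
  obtain ⟨⟨hsub, hpd⟩, hmax⟩ := hM
  set C : Finset V := M.biUnion (fun e => e.toFinset) with hC
  have hCcard : C.card = 2 * M.card := by
    rw [hC, Finset.card_biUnion]
    · rw [Finset.sum_congr rfl (g := fun _ => 2), Finset.sum_const, smul_eq_mul, mul_comm]
      intro e he
      exact Sym2.card_toFinset_of_not_isDiag e (G.not_isDiag_of_mem_edgeSet (hsub he))
    · intro e he f hf hef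
      refine Finset.disjoint_left.2 ?_
      intro v hv hv'
      exact hpd e he f hf hef v (Sym2.mem_toFinset.1 hv) (Sym2.mem_toFinset.1 hv')
  have hU : ∀ a b, a ∉ C → b ∉ C → ¬ G.Adj a b := by
    intro a b ha hb hab
    obtain ⟨f, hf, v, hv, hvf⟩ := hmax s(a, b) hab
    have hvC : v ∈ C := Finset.mem_biUnion.2 ⟨f, hf, Sym2.mem_toFinset.2 hvf⟩
    rcases Sym2.mem_iff.1 hv with rfl | rfl
    · exact ha hvC
    · exact hb hvC
  have hK1 : (K \ C).card ≤ 1 := by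
    rw [Finset.card_le_one]
    intro a ha b hb
    rw [Finset.mem_sdiff] at ha hb
    by_contra hab
    exact hU a b ha.2 hb.2 (hclique ha.1 hb.1 hab)
  have hI : (I \ C).card ≤ 2 := hI2 ▸ Finset.card_le_card Finset.sdiff_subset
  have hn : (K \ C).card + (I \ C).card + C.card = K.card + 2 := by
    have h1 := Finset.card_sdiff_add_card_inter K C
    have h2 := Finset.card_sdiff_add_card_inter I C
    have h3 : (K ∩ C).card + (I ∩ C).card = C.card := by
      rw [← Finset.card_union_of_disjoint, ← Finset.union_inter_distrib_right, hcover,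
        Finset.univ_inter]
      exact hdisj.mono Finset.inter_subset_left Finset.inter_subset_left
    omega
  have hne : ¬ ((K \ C).card = 1 ∧ (I \ C).card = 2) := by
    rintro ⟨h1, h2⟩
    obtain ⟨k, hk⟩ := Finset.card_pos.1 (by omega : 0 < (K \ C).card)
    rw [Finset.mem_sdiff] at hk
    obtain ⟨i, hi, hki⟩ := hKI k hk.1
    have hIe : I \ C = I := Finset.eq_of_subset_of_card_le Finset.sdiff_subset (by omega)
    rw [← hIe, Finset.mem_sdiff] at hi
    exact hU k i hk.2 hi.2 hki
  obtain ⟨m, hm⟩ := hKodd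
  omega

theorem stmt_1 {V : Type*} [Fintype V] [DecidableEq V]
    (G : SimpleGraph V) [DecidableRel G.Adj]
    (hNoIso : ∀ v : V, ∃ w : V, G.Adj v w)
    (K I : Finset V)
    (hdisj : Disjoint K I) (hcover : K ∪ I = Finset.univ)
    (hclique : G.IsClique (K : Set V)) (hindep : IsIndepSet G (I : Set V))
    (hKI : ∀ k ∈ K, ∃ i ∈ I, G.Adj k i)
    (hI2 : I.card = 2) (hKodd : Odd K.card) :
    Equimatchable G := by
  intro M₁ M₂ h₁ h₂
  have e₁ := aux_card G K I hdisj hcover hclique hKI hI2 hKodd M₁ h₁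
  have e₂ := aux_card G K I hdisj hcover hclique hKI hI2 hKodd M₂ h₂
  omega
end

section
/- Let G be a finite simple undirected graph with no isolated vertices admitting a split partition (K, I) where K is a clique, I is an independent set, and every vertex of K has at least one neighbor in I. If |I| = 2 and |K| = 2p − 1 for some natural number p ≥ 2, then every maximal matching of G has exactly p edges. -/
open Finset

variable {V : Type*}

theorem stmt_2 {V : Type*} [Fintype V] [DecidableEq V]
    (G : SimpleGraph V) [DecidableRel G.Adj]
    (hNoIso : ∀ v : V, ∃ w : V, G.Adj v w)
    (K I : Finset V)
    (hdisj : Disjoint K I) (hcover : K ∪ I = Finset.univ)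
    (hclique : G.IsClique (K : Set V)) (hindep : IsIndepSet G (I : Set V))
    (hKI : ∀ k ∈ K, ∃ i ∈ I, G.Adj k i)
    (hI2 : I.card = 2) (p : ℕ) (hp : 2 ≤ p) (hK : K.card = 2 * p - 1) :
    ∀ M : Finset (Sym2 V), IsMaximalMatching G M → M.card = p := by
  intro M hM
  obtain ⟨⟨hsub, hdis⟩, hmax⟩ := hM
  have hcard : (M.biUnion Sym2.toFinset).card = M.card * 2 := by
    rw [Finset.card_biUnion]
    · apply Finset.sum_const_nat
      intro e he
      exact Sym2.card_toFinset_of_not_isDiag e (G.not_isDiag_of_mem_edgeSet (hsub he))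
    · intro e he f hf hne
      rw [Function.onFun, Finset.disjoint_left]
      intro v hv hv2
      rw [Sym2.mem_toFinset] at hv hv2
      exact hdis e he f hf hne v hv hv2
  have htot : K.card + I.card = Fintype.card V := by
    rw [← Finset.card_union_of_disjoint hdisj, hcover, Finset.card_univ]
  have hU := Finset.card_add_card_compl (M.biUnion Sym2.toFinset)
  set U := (M.biUnion Sym2.toFinset)ᶜ with hUdef
  have hind : ∀ a ∈ U, ∀ b ∈ U, ¬ G.Adj a b := by
    intro a ha b hb hab
    obtain ⟨f, hf, v, hv, hvf⟩ := hmax s(a, b) hab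
    simp only [hUdef, Finset.mem_compl, Finset.mem_biUnion, Sym2.mem_toFinset] at ha hb
    rcases Sym2.mem_iff.1 hv with rfl | rfl
    · exact ha ⟨f, hf, hvf⟩
    · exact hb ⟨f, hf, hvf⟩
  have hUK : (U ∩ K).card ≤ 1 := by
    rw [Finset.card_le_one]
    intro a ha b hb
    rw [Finset.mem_inter] at ha hb
    by_contra hne
    exact hind a ha.1 b hb.1 (hclique ha.2 hb.2 hne)
  have hsplit : U.card = (U ∩ K).card + (U ∩ I).card := by
    rw [← Finset.card_union_of_disjoint, ← Finset.inter_union_distrib_left, hcover,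
      Finset.inter_univ]
    exact hdisj.mono Finset.inter_subset_right Finset.inter_subset_right
  have hUI : (U ∩ I).card ≤ I.card := Finset.card_le_card Finset.inter_subset_right
  have hU2 : U.card ≤ 2 := by
    by_contra hlt
    have h1 : 0 < (U ∩ K).card := by omega
    have h2 : U ∩ I = I := Finset.eq_of_subset_of_card_le Finset.inter_subset_right (by omega)
    obtain ⟨k, hk⟩ := Finset.card_pos.1 h1
    rw [Finset.mem_inter] at hk
    obtain ⟨i, hi, hadj⟩ := hKI k hk.2
    rw [← h2] at hi
    exact hind k hk.1 i (Finset.mem_inter.1 hi).1 hadj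
  omega
end

section
/- Let G be a finite simple undirected graph with no isolated vertices admitting a split partition (K, I) where K is a clique, I is an independent set, and every vertex of K has at least one neighbor in I. If G is equimatchable and |I| ≥ 2 and |K| ≥ 2, then |K| is odd. -/
open Finset

variable {V : Type*}

def MatchOn {V : Type*} (G : SimpleGraph V) (S : Finset V) (n : ℕ) : Prop :=
  ∃ M : Finset (Sym2 V), IsMatching G M ∧ M.card = n ∧ ∀ v, v ∈ S ↔ ∃ e ∈ M, v ∈ e

theorem MatchOn.extend {V : Type*} [DecidableEq V] {G : SimpleGraph V} {S : Finset V} {n : ℕ}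
    (h : MatchOn G S n) {x y : V} (hxy : G.Adj x y) (hx : x ∉ S) (hy : y ∉ S) :
    MatchOn G (insert x (insert y S)) (n + 1) := by
  obtain ⟨M, ⟨hM1, hM2⟩, hc, hv⟩ := h
  have key : ∀ e ∈ M, ∀ v, v ∈ e → v ≠ x ∧ v ≠ y := by
    intro e he v hve
    have : v ∈ S := (hv v).2 ⟨e, he, hve⟩
    constructor
    · rintro rfl; exact hx this
    · rintro rfl; exact hy this
  refine ⟨insert s(x, y) M, ⟨?_, ?_⟩, ?_, ?_⟩
  · intro e he
    rcases Finset.mem_insert.1 (Finset.mem_coe.1 he) with rfl | he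
    · exact hxy
    · exact hM1 he
  · intro e he f hf hne v hve hvf
    rcases Finset.mem_insert.1 he with rfl | he <;> rcases Finset.mem_insert.1 hf with rfl | hf
    · exact hne rfl
    · have := key f hf v hvf
      rcases Sym2.mem_iff.1 hve with h | h
      · exact this.1 h
      · exact this.2 h
    · have := key e he v hve
      rcases Sym2.mem_iff.1 hvf with h | h
      · exact this.1 h
      · exact this.2 h
    · exact hM2 e he f hf hne v hve hvf
  · rw [Finset.card_insert_of_notMem, hc]
    intro hmem
    exact (key _ hmem x (Sym2.mem_mk_left x y)).1 rfl
  · intro v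
    simp only [Finset.mem_insert, hv v, exists_eq_or_imp, Sym2.mem_iff, or_assoc]

theorem matchOn_clique {V : Type*} [DecidableEq V] (G : SimpleGraph V) (n : ℕ) :
    ∀ S : Finset V, G.IsClique (S : Set V) → S.card = 2 * n → MatchOn G S n := by
  induction n with
  | zero =>
    intro S _ hS
    have : S = ∅ := Finset.card_eq_zero.1 (by omega)
    subst this
    exact ⟨∅, ⟨by simp, by simp⟩, rfl, by simp⟩
  | succ n ih =>
    intro S hcl hS
    obtain ⟨x, hx, y, hy, hxy⟩ := Finset.one_lt_card.1 (show 1 < S.card by omega)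
    have hyx : y ∈ S.erase x := Finset.mem_erase.2 ⟨hxy.symm, hy⟩
    have h := ih ((S.erase x).erase y) (hcl.subset (by
      intro v hv
      simp at hv
      tauto)) (by
      rw [Finset.card_erase_of_mem hyx, Finset.card_erase_of_mem hx]; omega)
    have h2 := h.extend (hcl hx hy hxy) (by simp) (by simp)
    rwa [Finset.insert_erase hyx, Finset.insert_erase hx] at h2

theorem MatchOn.maximal {V : Type*} {G : SimpleGraph V} {S : Finset V} {n : ℕ}
    (h : MatchOn G S n) (hS : ∀ x y, G.Adj x y → x ∈ S ∨ y ∈ S) :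
    ∃ M, IsMaximalMatching G M ∧ M.card = n := by
  obtain ⟨M, hM, hc, hv⟩ := h
  refine ⟨M, ⟨hM, ?_⟩, hc⟩
  intro e
  induction e using Sym2.ind with
  | _ x y =>
    intro he
    rcases hS x y he with h | h
    · obtain ⟨f, hf, hxf⟩ := (hv x).1 h
      exact ⟨f, hf, x, Sym2.mem_mk_left x y, hxf⟩
    · obtain ⟨f, hf, hxf⟩ := (hv y).1 h
      exact ⟨f, hf, y, Sym2.mem_mk_right x y, hxf⟩

theorem stmt_3 {V : Type*} [Fintype V] [DecidableEq V]
    (G : SimpleGraph V) [DecidableRel G.Adj]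
    (hNoIso : ∀ v : V, ∃ w : V, G.Adj v w)
    (K I : Finset V)
    (hdisj : Disjoint K I) (hcover : K ∪ I = Finset.univ)
    (hclique : G.IsClique (K : Set V)) (hindep : IsIndepSet G (I : Set V))
    (hKI : ∀ k ∈ K, ∃ i ∈ I, G.Adj k i)
    (hEq : Equimatchable G) (hI2 : 2 ≤ I.card) (hK2 : 2 ≤ K.card) :
    Odd K.card := by
  by_contra hodd
  obtain ⟨m, hm⟩ := Nat.not_odd_iff_even.1 hodd
  have hmem : ∀ v, v ∈ K ∨ v ∈ I := fun v => by
    rw [← Finset.mem_union, hcover]; exact Finset.mem_univ v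
  have hnot : ∀ v ∈ I, v ∉ K := fun v hi hk => Finset.disjoint_left.1 hdisj hk hi
  have hKcov : ∀ x y, G.Adj x y → x ∈ K ∨ y ∈ K := by
    intro x y hxy
    by_contra! hc
    exact hindep ((hmem x).resolve_left hc.1) ((hmem y).resolve_left hc.2) hxy.ne hxy
  have hIK : ∀ i ∈ I, ∃ k ∈ K, G.Adj k i := by
    intro i hi
    obtain ⟨w, hw⟩ := hNoIso i
    exact ⟨w, (hKcov i w hw).resolve_left (hnot i hi), hw.symm⟩
  have hex : ∃ a ∈ K, ∃ b ∈ K, ∃ i ∈ I, ∃ j ∈ I, a ≠ b ∧ i ≠ j ∧ G.Adj a i ∧ G.Adj b j := by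
    obtain ⟨a, ha, b, hb, hab⟩ := Finset.one_lt_card.1 (show 1 < K.card by omega)
    obtain ⟨i, hi, hai⟩ := hKI a ha
    obtain ⟨i', hi', hne⟩ := Finset.exists_mem_ne (show 1 < I.card by omega) i
    obtain ⟨k, hk, hki⟩ := hIK i' hi'
    by_cases hka : k = a
    · subst hka
      obtain ⟨j, hj, hbj⟩ := hKI b hb
      by_cases hji : j = i
      · subst hji
        exact ⟨k, ha, b, hb, i', hi', j, hj, hab, hne, hki, hbj⟩
      · exact ⟨k, ha, b, hb, i, hi, j, hj, hab, Ne.symm hji, hai, hbj⟩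
    · exact ⟨a, ha, k, hk, i, hi, i', hi', Ne.symm hka, hne.symm, hai, hki⟩
  obtain ⟨a, ha, b, hb, i, hi, j, hj, hab, hij, hai, hbj⟩ := hex
  obtain ⟨M₁, hM₁, hc₁⟩ := (matchOn_clique G m K hclique (by omega)).maximal hKcov
  have hba : b ∈ K.erase a := Finset.mem_erase.2 ⟨hab.symm, hb⟩
  have h0 := matchOn_clique G (m - 1) ((K.erase a).erase b) (hclique.subset (by
      intro v hv
      simp at hv
      tauto)) (by
      rw [Finset.card_erase_of_mem hba, Finset.card_erase_of_mem ha]; omega)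
  have hiK := hnot i hi
  have hjK := hnot j hj
  have haj : a ≠ j := by rintro rfl; exact hjK ha
  have hib : i ≠ b := by rintro rfl; exact hiK hb
  have h1 := h0.extend hbj (by simp) (by simp [hjK])
  have h2 := h1.extend hai (by simp [hab, haj]) (by simp [hiK, hib, hij])
  obtain ⟨M₂, hM₂, hc₂⟩ := h2.maximal (by
    have hsub : ∀ x ∈ K, x ∈ insert a (insert i (insert b (insert j ((K.erase a).erase b)))) := by
      intro x hx
      simp only [Finset.mem_insert, Finset.mem_erase]
      tauto
    intro x y hxy
    exact (hKcov x y hxy).imp (hsub x) (hsub y))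
  have := hEq M₁ M₂ hM₁ hM₂
  omega
end

section
/- Let G be a finite simple undirected graph with no isolated vertices admitting a split partition (K, I) where K is a clique, I is an independent set, and every vertex of K has at least one neighbor in I. If G is equimatchable, then there do not exist six pairwise distinct vertices k₁, k₂, k₃ ∈ K and i₁, i₂, i₃ ∈ I such that k₁i₁, k₂i₂, and k₃i₃ are all edges of G. -/
open Finset

variable {V : Type*}

theorem aux_extend [Fintype V] (G : SimpleGraph V) (M : Finset (Sym2 V)) (hM : IsMatching G M) :
    ∃ N, M ⊆ N ∧ IsMaximalMatching G N := by
  classical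
  obtain ⟨N, hMN, hN⟩ := (Set.toFinite {N | IsMatching G N}).exists_le_maximal hM
  refine ⟨N, hMN, hN.1, ?_⟩
  intro e he
  by_contra! hcon
  have h1 : IsMatching G (insert e N) := by
    refine ⟨?_, ?_⟩
    · intro f hf
      rcases Finset.mem_insert.1 hf with rfl | hf
      · exact he
      · exact hN.1.1 hf
    · intro f hf g hg hne v hvf hvg
      rcases Finset.mem_insert.1 hf with h1 | h1 <;> rcases Finset.mem_insert.1 hg with h2 | h2
      · exact hne (h1.trans h2.symm)
      · exact hcon g h2 v (h1 ▸ hvf) hvg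
      · exact hcon f h1 v (h2 ▸ hvg) hvf
      · exact hN.1.2 f h1 g h2 hne v hvf hvg
  have h2 : e ∈ N := hN.2 h1 (Finset.subset_insert _ _) (Finset.mem_insert_self _ _)
  induction e with
  | h x y => exact hcon _ h2 x (by simp) (by simp)

theorem aux_insert [DecidableEq V] (G : SimpleGraph V) (N : Finset (Sym2 V))
    (hN : IsMatching G N) (a b : V) (hab : G.Adj a b)
    (ha : ∀ f ∈ N, a ∉ f) (hb : ∀ f ∈ N, b ∉ f) :
    IsMatching G (insert s(a, b) N) ∧ (insert s(a, b) N).card = N.card + 1 := by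
  refine ⟨⟨?_, ?_⟩, ?_⟩
  · intro f hf
    rcases Finset.mem_insert.1 hf with rfl | hf
    · exact hab
    · exact hN.1 hf
  · have key : ∀ f ∈ N, ∀ v, v ∈ s(a, b) → v ∉ f := by
      intro f hf v hv
      rcases Sym2.mem_iff.1 hv with rfl | rfl
      · exact ha f hf
      · exact hb f hf
    intro f hf g hg hne v hvf hvg
    rcases Finset.mem_insert.1 hf with h1 | h1 <;> rcases Finset.mem_insert.1 hg with h2 | h2
    · exact hne (h1.trans h2.symm)
    · exact key g h2 v (h1 ▸ hvf) hvg
    · exact key f h1 v (h2 ▸ hvg) hvf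
    · exact hN.2 f h1 g h2 hne v hvf hvg
  · exact Finset.card_insert_of_notMem (fun h => ha _ h (by simp))

theorem aux_erase [DecidableEq V] (G : SimpleGraph V) (N : Finset (Sym2 V))
    (hN : IsMatching G N) (e : Sym2 V) (he : e ∈ N) :
    IsMatching G (N.erase e) ∧ ∀ v ∈ e, ∀ f ∈ N.erase e, v ∉ f := by
  refine ⟨⟨fun f hf => hN.1 (Finset.mem_of_mem_erase hf), fun f hf g hg =>
    hN.2 f (Finset.mem_of_mem_erase hf) g (Finset.mem_of_mem_erase hg)⟩, ?_⟩
  intro v hv f hf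
  exact hN.2 e he f (Finset.mem_of_mem_erase hf) (Finset.ne_of_mem_erase hf).symm v hv

/-- Replace edges `a x`, `b y` of a matching by `a b`. -/
theorem aux_swap [DecidableEq V] (G : SimpleGraph V) (N : Finset (Sym2 V))
    (hN : IsMatching G N) (a b x y : V) (hab : G.Adj a b) (h1 : s(a, x) ∈ N) (h2 : s(b, y) ∈ N)
    (hne : s(a, x) ≠ s(b, y)) :
    ∃ N', IsMatching G N' ∧ N'.card + 1 = N.card ∧
      ∀ v, v ≠ x → v ≠ y → (∃ f ∈ N, v ∈ f) → ∃ f ∈ N', v ∈ f := by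
  obtain ⟨m1, c1⟩ := aux_erase G N hN _ h1
  have h2' : s(b, y) ∈ N.erase s(a, x) := Finset.mem_erase.2 ⟨hne.symm, h2⟩
  obtain ⟨m2, c2⟩ := aux_erase G _ m1 _ h2'
  obtain ⟨m3, c3⟩ := aux_insert G _ m2 a b hab
    (fun f hf => c1 a (by simp) f (Finset.mem_of_mem_erase hf)) (fun f hf => c2 b (by simp) f hf)
  refine ⟨_, m3, ?_, ?_⟩
  · have e1 := Finset.card_erase_add_one h1
    have e2 := Finset.card_erase_add_one h2'
    omega
  · rintro v hx hy ⟨f, hf, hv⟩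
    by_cases q1 : f = s(a, x)
    · subst q1
      have : v = a := by simpa [hx] using hv
      exact ⟨_, Finset.mem_insert_self _ _, by simp [this]⟩
    by_cases q2 : f = s(b, y)
    · subst q2
      have : v = b := by simpa [hy] using hv
      exact ⟨_, Finset.mem_insert_self _ _, by simp [this]⟩
    exact ⟨f, by simp [q1, q2, hf], hv⟩

/-- Replace the edge `a x` of a matching by `u a`, with `u` uncovered. -/
theorem aux_replace [DecidableEq V] (G : SimpleGraph V) (N : Finset (Sym2 V))
    (hN : IsMatching G N) (a x u : V) (hua : G.Adj u a) (h1 : s(a, x) ∈ N)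
    (hu : ∀ f ∈ N, u ∉ f) :
    ∃ N', IsMatching G N' ∧ N'.card = N.card ∧ (∃ f ∈ N', u ∈ f) ∧
      (∀ f ∈ N, f ≠ s(a, x) → f ∈ N') ∧
      ∀ v, v ≠ x → (∃ f ∈ N, v ∈ f) → ∃ f ∈ N', v ∈ f := by
  obtain ⟨m1, c1⟩ := aux_erase G N hN _ h1
  obtain ⟨m3, c3⟩ := aux_insert G _ m1 u a hua
    (fun f hf => hu f (Finset.mem_of_mem_erase hf)) (fun f hf => c1 a (by simp) f hf)
  refine ⟨_, m3, ?_, ⟨_, Finset.mem_insert_self _ _, by simp⟩, ?_, ?_⟩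
  · have e1 := Finset.card_erase_add_one h1
    omega
  · intro f hf hne
    simp [hf, hne]
  · rintro v hx ⟨f, hf, hv⟩
    by_cases q1 : f = s(a, x)
    · subst q1
      have : v = a := by simpa [hx] using hv
      exact ⟨_, Finset.mem_insert_self _ _, by simp [this]⟩
    exact ⟨f, by simp [q1, hf], hv⟩

theorem stmt_4 {V : Type*} [Fintype V] [DecidableEq V]
    (G : SimpleGraph V) [DecidableRel G.Adj]
    (hNoIso : ∀ v : V, ∃ w : V, G.Adj v w)
    (K I : Finset V)
    (hdisj : Disjoint K I) (hcover : K ∪ I = Finset.univ)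
    (hclique : G.IsClique (K : Set V)) (hindep : IsIndepSet G (I : Set V))
    (hKI : ∀ k ∈ K, ∃ i ∈ I, G.Adj k i)
    (hEq : Equimatchable G) :
    ¬ ∃ k₁ k₂ k₃ i₁ i₂ i₃ : V,
        k₁ ∈ K ∧ k₂ ∈ K ∧ k₃ ∈ K ∧ i₁ ∈ I ∧ i₂ ∈ I ∧ i₃ ∈ I ∧
        ([k₁, k₂, k₃, i₁, i₂, i₃] : List V).Nodup ∧
        G.Adj k₁ i₁ ∧ G.Adj k₂ i₂ ∧ G.Adj k₃ i₃ := by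
  rintro ⟨k₁, k₂, k₃, i₁, i₂, i₃, hk₁, hk₂, hk₃, hi₁, hi₂, hi₃, hnd, a₁, a₂, a₃⟩
  have hKnI : ∀ v ∈ K, ∀ w ∈ I, v ≠ w := fun v hv w hw h =>
    Finset.disjoint_left.1 hdisj hv (h ▸ hw)
  have hmax : ∀ N, IsMatching G N → (∀ v ∈ K, ∃ f ∈ N, v ∈ f) → IsMaximalMatching G N := by
    intro N hN hc
    refine ⟨hN, ?_⟩
    intro e he
    induction e with
    | h x y =>
      have hxy : G.Adj x y := he
      have hK : x ∈ K ∨ y ∈ K := by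
        by_contra! h
        have hI : ∀ z, z ∉ K → z ∈ I := fun z hz => by
          have := Finset.mem_univ z
          rw [← hcover, Finset.mem_union] at this
          exact this.resolve_left hz
        exact hindep (hI x h.1) (hI y h.2) hxy.ne hxy
      rcases hK with h | h
      · obtain ⟨f, hf, hv⟩ := hc x h
        exact ⟨f, hf, x, by simp, hv⟩
      · obtain ⟨f, hf, hv⟩ := hc y h
        exact ⟨f, hf, y, by simp, hv⟩
  simp only [List.nodup_cons, List.mem_cons, List.not_mem_nil, or_false, not_or] at hnd
  obtain ⟨⟨n12, n13, n14, n15, n16⟩, ⟨n23, n24, n25, n26⟩, ⟨n34, n35, n36⟩, ⟨n45, n46⟩, n56, -⟩ := hnd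
  have d12 : s(k₁, i₁) ≠ s(k₂, i₂) := by simp [n12, n15]
  have d13 : s(k₁, i₁) ≠ s(k₃, i₃) := by simp [n13, n16]
  have d23 : s(k₂, i₂) ≠ s(k₃, i₃) := by simp [n23, n26]
  have hM0 : IsMatching G ∅ := ⟨by simp, by simp⟩
  have hM1 := (aux_insert G _ hM0 k₁ i₁ a₁ (by simp) (by simp)).1
  have hM2 := (aux_insert G _ hM1 k₂ i₂ a₂ (by simp; grind) (by simp; grind)).1
  have hM3 := (aux_insert G _ hM2 k₃ i₃ a₃ (by simp; grind) (by simp; grind)).1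
  obtain ⟨M, hsub, hM⟩ := aux_extend G _ hM3
  have e1 : s(k₁, i₁) ∈ M := hsub (by simp)
  have e2 : s(k₂, i₂) ∈ M := hsub (by simp)
  have e3 : s(k₃, i₃) ∈ M := hsub (by simp)
  have fin : ∀ N, IsMatching G N → N.card = M.card → s(k₁, i₁) ∈ N → s(k₂, i₂) ∈ N →
      (∀ v ∈ K, ∃ f ∈ N, v ∈ f) → False := by
    intro N hN hcard h1 h2 hc
    obtain ⟨N', hN', hcard', hcov⟩ := aux_swap G N hN k₁ k₂ i₁ i₂ (hclique hk₁ hk₂ n12) h1 h2 d12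
    have := hEq _ _ hM (hmax N' hN' fun v hv =>
      hcov v (hKnI v hv _ hi₁) (hKnI v hv _ hi₂) (hc v hv))
    omega
  by_cases hc : ∀ v ∈ K, ∃ f ∈ M, v ∈ f
  · exact fin M hM.1 rfl e1 e2 hc
  push Not at hc
  obtain ⟨u, huK, hu⟩ := hc
  have huk : u ≠ k₃ := by
    rintro rfl
    exact hu _ e3 (by simp)
  obtain ⟨N, hN, hcard, hNu, hkeep, hcov⟩ :=
    aux_replace G M hM.1 k₃ i₃ u (hclique huK hk₃ huk) e3 hu
  refine fin N hN hcard (hkeep _ e1 d13) (hkeep _ e2 d23) ?_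
  intro v hv
  by_cases hvu : v = u
  · exact hvu ▸ hNu
  refine hcov v (hKnI v hv _ hi₃) ?_
  obtain ⟨f, hf, w, hw, hwf⟩ := hM.2 s(v, u) (hclique hv huK hvu)
  rcases Sym2.mem_iff.1 hw with rfl | rfl
  · exact ⟨f, hf, hwf⟩
  · exact absurd hwf (hu f hf)
end

section
/- Let G be a finite simple undirected graph with no isolated vertices admitting a split partition (K, I) where K is a clique, I is an independent set, and every vertex of K has at least one neighbor in I. Assume G is equimatchable, |I| ≥ 3, and |K| ≥ 2. If v ∈ K and i ∈ I are such that vi is not an edge of G, then every vertex j ∈ I that is adjacent to v satisfies either N(j) = K − N(i) or N(j) = K, where N(u) denotes the set of neighbors of u in G. -/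
open Finset

variable {V : Type*}

theorem match_insert {V : Type*} [DecidableEq V] {G : SimpleGraph V} {M : Finset (Sym2 V)}
    (hM : IsMatching G M) {a b : V} (hab : G.Adj a b)
    (ha : ∀ e ∈ M, a ∉ e) (hb : ∀ e ∈ M, b ∉ e) :
    IsMatching G (insert s(a, b) M) ∧ (insert s(a, b) M).card = M.card + 1 := by
  refine ⟨⟨?_, ?_⟩, ?_⟩
  · intro e he
    simp only [Finset.coe_insert, Set.mem_insert_iff] at he
    rcases he with rfl | he
    · exact hab
    · exact hM.1 he
  · intro e he f hf hne w hwe hwf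
    rw [Finset.mem_insert] at he hf
    rcases he with rfl | he <;> rcases hf with rfl | hf
    · exact hne rfl
    · rw [Sym2.mem_iff] at hwe
      rcases hwe with rfl | rfl
      · exact ha _ hf hwf
      · exact hb _ hf hwf
    · rw [Sym2.mem_iff] at hwf
      rcases hwf with rfl | rfl
      · exact ha _ he hwe
      · exact hb _ he hwe
    · exact hM.2 e he f hf hne w hwe hwf
  · apply Finset.card_insert_of_notMem
    intro h
    exact ha _ h (Sym2.mem_mk_left a b)

theorem match_extend {V : Type*} [DecidableEq V] {G : SimpleGraph V} (n : ℕ) :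
    ∀ (S : Finset V) (M : Finset (Sym2 V)), IsMatching G M → G.IsClique (S : Set V) →
      S.card = 2 * n → (∀ a ∈ S, ∀ e ∈ M, a ∉ e) →
      ∃ M', IsMatching G M' ∧ M ⊆ M' ∧ M'.card = M.card + n ∧ ∀ a ∈ S, ∃ e ∈ M', a ∈ e := by
  induction n with
  | zero =>
    intro S M hM hS hc hd
    have : S = ∅ := by simpa using hc
    subst this
    exact ⟨M, hM, subset_rfl, by simp, by simp⟩
  | succ n ih =>
    intro S M hM hS hc hd
    obtain ⟨a, ha, b, hb, hab⟩ := Finset.one_lt_card.1 (show 1 < S.card by omega)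
    obtain ⟨h1, h2⟩ := match_insert hM (hS ha hb hab) (hd a ha) (hd b hb)
    obtain ⟨M', h3, h4, h5, h6⟩ := ih ((S.erase a).erase b) (insert s(a, b) M) h1
      (hS.subset (fun x hx => Finset.mem_of_mem_erase (Finset.mem_of_mem_erase hx)))
      (by rw [Finset.card_erase_of_mem (by simp [hb, hab.symm]), Finset.card_erase_of_mem ha]
          omega)
      (by
        intro x hx e he hxe
        simp only [Finset.mem_erase] at hx
        rw [Finset.mem_insert] at he
        rcases he with rfl | he
        · rw [Sym2.mem_iff] at hxe
          tauto
        · exact hd x hx.2.2 e he hxe)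
    have hmem : s(a, b) ∈ M' := h4 (Finset.mem_insert_self _ _)
    refine ⟨M', h3, (Finset.subset_insert _ _).trans h4, by omega, ?_⟩
    intro x hx
    by_cases hxa : x = a
    · exact ⟨_, hmem, by simp [hxa]⟩
    by_cases hxb : x = b
    · exact ⟨_, hmem, by simp [hxb]⟩
    exact h6 x (by simp [hx, hxa, hxb])

theorem match_max {V : Type*} [Fintype V] [DecidableEq V] {G : SimpleGraph V}
    {K I : Finset V} (hcover : K ∪ I = Finset.univ)
    (hclique : G.IsClique (K : Set V)) (hindep : IsIndepSet G (I : Set V))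
    (T : Finset V) (hT : T ⊆ K) (M : Finset (Sym2 V)) (hM : IsMatching G M)
    (hcov : ∀ a ∈ T, ∃ e ∈ M, a ∈ e) (hunc : ∀ a ∈ K, a ∉ T → ∀ e ∈ M, a ∉ e)
    (n : ℕ) (hn : K.card = T.card + 2 * n) :
    ∃ M', IsMaximalMatching G M' ∧ M'.card = M.card + n := by
  obtain ⟨M', h3, h4, h5, h6⟩ := match_extend n (K \ T) M hM
    (hclique.subset (fun x hx => by simp at hx; exact hx.1))
    (by rw [Finset.card_sdiff_of_subset hT]; omega)
    (by
      intro a ha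
      rw [Finset.mem_sdiff] at ha
      exact hunc a ha.1 ha.2)
  have key : ∀ a ∈ K, ∃ e ∈ M', a ∈ e := by
    intro a ha
    by_cases haT : a ∈ T
    · obtain ⟨e, he, hae⟩ := hcov a haT
      exact ⟨e, h4 he, hae⟩
    · exact h6 a (Finset.mem_sdiff.2 ⟨ha, haT⟩)
  refine ⟨M', ⟨h3, ?_⟩, h5⟩
  intro e
  induction e using Sym2.ind with
  | _ x y =>
    intro he
    have hxy : G.Adj x y := he
    have hx : x ∈ K ∪ I := by rw [hcover]; simp
    have hy : y ∈ K ∪ I := by rw [hcover]; simp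
    rw [Finset.mem_union] at hx hy
    rcases hx with hx | hx
    · obtain ⟨f, hf, hxf⟩ := key x hx
      exact ⟨f, hf, x, by simp, hxf⟩
    rcases hy with hy | hy
    · obtain ⟨f, hf, hxf⟩ := key y hy
      exact ⟨f, hf, y, by simp, hxf⟩
    · exact absurd hxy (hindep hx hy hxy.ne)

theorem match_empty {V : Type*} (G : SimpleGraph V) : IsMatching G ∅ := by
  constructor <;> simp

theorem stmt_5 {V : Type*} [Fintype V] [DecidableEq V]
    (G : SimpleGraph V) [DecidableRel G.Adj]
    (hNoIso : ∀ v : V, ∃ w : V, G.Adj v w)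
    (K I : Finset V)
    (hdisj : Disjoint K I) (hcover : K ∪ I = Finset.univ)
    (hclique : G.IsClique (K : Set V)) (hindep : IsIndepSet G (I : Set V))
    (hKI : ∀ k ∈ K, ∃ i ∈ I, G.Adj k i)
    (hEq : Equimatchable G) (hI3 : 3 ≤ I.card) (hK2 : 2 ≤ K.card)
    (v : V) (i : V) (hv : v ∈ K) (hi : i ∈ I) (hvi : ¬ G.Adj v i) :
    ∀ j ∈ I, G.Adj v j →
      (G.neighborSet j = (K : Set V) \ G.neighborSet i ∨
        G.neighborSet j = (K : Set V)) := by
  intro j hj hvj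
  have hKnI : ∀ a ∈ K, ∀ b ∈ I, a ≠ b := fun a ha b hb hab =>
    Finset.disjoint_left.1 hdisj ha (hab ▸ hb)
  have hcov : ∀ a, a ∈ K ∨ a ∈ I := fun a => by
    have : a ∈ K ∪ I := by rw [hcover]; simp
    simpa using this
  have hIn : ∀ b ∈ I, ∀ a, G.Adj a b → a ∈ K := by
    intro b hb a hab
    rcases hcov a with h | h
    · exact h
    · exact absurd hab (hindep h hb hab.ne)
  have hji : j ≠ i := by rintro rfl; exact hvi hvj
  obtain ⟨x, hxi'⟩ := hNoIso i
  have hxi : G.Adj x i := hxi'.symm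
  have hxK : x ∈ K := hIn i hi x hxi
  have hxv : x ≠ v := by rintro rfl; exact hvi hxi
  -- one-edge matching
  obtain ⟨m1, c1⟩ := match_insert (match_empty G) hvj (by simp) (by simp)
  -- two disjoint edges rule out the even case
  have hodd : Odd K.card := by
    by_contra hne
    rw [Nat.not_odd_iff_even] at hne
    obtain ⟨m, hm⟩ := hne
    obtain ⟨A, hA, hAc⟩ := match_max hcover hclique hindep ∅ (by simp) ∅ (match_empty G)
      (by simp) (by simp) m (by simp; omega)
    obtain ⟨m2, c2⟩ := match_insert m1 hxi
      (by have := hKnI x hxK j hj; simp [hxv, this])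
      (by have := (hKnI v hv i hi).symm; simp [hji.symm, this])
    obtain ⟨B, hB, hBc⟩ := match_max hcover hclique hindep {v, x}
      (by intro a; simp; rintro (rfl | rfl) <;> assumption) _ m2
      (by simp)
      (by
        intro a ha haT
        have := hKnI a ha i hi
        have := hKnI a ha j hj
        simp at haT
        simp [*]) (m - 1)
      (by rw [Finset.card_pair hxv.symm]; omega)
    have := hEq A B hA hB
    rw [Finset.card_empty] at c1 hAc
    omega
  -- no three disjoint edges
  have h3 : ∀ a₁ a₂ a₃ b₁ b₂ b₃, b₁ ∈ I → b₂ ∈ I → b₃ ∈ I → G.Adj a₁ b₁ → G.Adj a₂ b₂ →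
      G.Adj a₃ b₃ → a₁ ≠ a₂ → a₁ ≠ a₃ → a₂ ≠ a₃ → b₁ ≠ b₂ → b₁ ≠ b₃ → b₂ ≠ b₃ → False := by
    intro a₁ a₂ a₃ b₁ b₂ b₃ i₁ i₂ i₃ e₁ e₂ e₃ n12 n13 n23 l12 l13 l23
    have k₁ := hIn _ i₁ _ e₁
    have k₂ := hIn _ i₂ _ e₂
    have k₃ := hIn _ i₃ _ e₃
    obtain ⟨m, hm⟩ := hodd
    obtain ⟨A, hA, hAc⟩ := match_max hcover hclique hindep {v} (by simpa using hv) _ m1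
      (by simp)
      (by
        intro a ha haT
        have := hKnI a ha j hj
        simp at haT
        simp [*]) m (by simp; omega)
    obtain ⟨p1, q1⟩ := match_insert (match_empty G) e₁ (by simp) (by simp)
    obtain ⟨p2, q2⟩ := match_insert p1 e₂
      (by have := hKnI _ k₂ _ i₁; simp [n12.symm, this])
      (by have := (hKnI _ k₁ _ i₂).symm; simp [l12.symm, this])
    obtain ⟨p3, q3⟩ := match_insert p2 e₃
      (by have := hKnI _ k₃ _ i₁; have := hKnI _ k₃ _ i₂; simp [n13.symm, n23.symm, *])
      (by have := (hKnI _ k₁ _ i₃).symm; have := (hKnI _ k₂ _ i₃).symm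
          simp [l13.symm, l23.symm, *])
    have hT : ({a₁, a₂, a₃} : Finset V) ⊆ K := by
      intro a; simp; rintro (rfl | rfl | rfl) <;> assumption
    have hT3 : ({a₁, a₂, a₃} : Finset V).card = 3 := Finset.card_eq_three.2
      ⟨_, _, _, n12, n13, n23, rfl⟩
    have hle := Finset.card_le_card hT
    obtain ⟨B, hB, hBc⟩ := match_max hcover hclique hindep {a₁, a₂, a₃} hT _ p3
      (by simp)
      (by
        intro a ha haT
        have := hKnI a ha _ i₁
        have := hKnI a ha _ i₂
        have := hKnI a ha _ i₃
        simp at haT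
        simp [*]) (m - 1) (by omega)
    have := hEq A B hA hB
    rw [Finset.card_empty] at c1 q1
    omega
  have hK3 : 2 < K.card := by
    obtain ⟨m, hm⟩ := hodd
    omega
  have hu : ∀ u ∈ K, u ≠ v → u ≠ x → ∀ b ∈ I, G.Adj u b → b = i ∨ b = j := by
    intro u hu huv hux b hb hub
    by_contra hc
    push Not at hc
    exact h3 v x u j i b hj hi hb hvj hxi hub hxv.symm huv.symm hux.symm hji hc.2.symm hc.1.symm
  have hw : ∀ w ∈ I, w ≠ i → w ≠ j → ∀ a, G.Adj a w → a = v ∨ a = x := by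
    intro w hw hwi hwj a haw
    by_contra hc
    push Not at hc
    exact h3 v x a j i w hj hi hw hvj hxi haw hxv.symm hc.1.symm hc.2.symm hji hwj.symm hwi.symm
  obtain ⟨w, hwI, hwn⟩ := Finset.exists_mem_notMem_of_card_lt_card
    (show ({i, j} : Finset V).card < I.card from lt_of_le_of_lt Finset.card_le_two hI3)
  simp at hwn
  obtain ⟨u, huK, hun⟩ := Finset.exists_mem_notMem_of_card_lt_card
    (show ({v, x} : Finset V).card < K.card from lt_of_le_of_lt Finset.card_le_two hK3)
  simp at hun
  obtain ⟨hwi, hwj⟩ := hwn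
  obtain ⟨huv, hux⟩ := hun
  obtain ⟨y, hy⟩ := hNoIso w
  have hwvx := hw w hwI hwi hwj y hy.symm
  rcases hwvx with rfl | rfl
  · -- `w` is adjacent to `v`
    left
    have hnj : ∀ a, a ≠ y → a ≠ x → ¬ G.Adj a j := fun a h1 h2 h =>
      h3 y a x w j i hwI hj hi hy.symm h hxi h1.symm hxv.symm h2 hwj hwi hji
    have hKi : ∀ a ∈ K, a ≠ y → G.Adj a i := by
      intro a ha hay
      by_cases hax : a = x
      · exact hax ▸ hxi
      obtain ⟨b, hb, hab⟩ := hKI a ha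
      rcases hu a ha hay hax b hb hab with rfl | rfl
      · exact hab
      · exact absurd hab (hnj a hay hax)
    have hxj : ¬ G.Adj x j := fun h =>
      h3 y x u w j i hwI hj hi hy.symm h (hKi u huK huv) hxv.symm (Ne.symm huv) (Ne.symm hux)
        hwj hwi hji
    ext a
    simp only [SimpleGraph.mem_neighborSet, Set.mem_sdiff, Finset.mem_coe]
    constructor
    · intro h
      have hay : a = y := by
        by_contra hay
        by_cases hax : a = x
        · exact hxj (hax ▸ h.symm)
        · exact hnj a hay hax h.symm
      subst hay
      exact ⟨hv, fun h => hvi h.symm⟩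
    · rintro ⟨ha, hai⟩
      have hay : a = y := by
        by_contra hay
        exact hai (hKi a ha hay).symm
      subst hay
      exact hvj.symm
  · -- `w` is adjacent to `x`
    have hni : ∀ a, a ≠ y → a ≠ v → ¬ G.Adj a i := fun a h1 h2 h =>
      h3 y a v w i j hwI hi hj hy.symm h hvj h1.symm hxv h2 hwi hwj hji.symm
    have hKj : ∀ a ∈ K, a ≠ y → G.Adj a j := by
      intro a ha hay
      by_cases hav : a = v
      · exact hav ▸ hvj
      obtain ⟨b, hb, hab⟩ := hKI a ha
      rcases hu a ha hav hay b hb hab with rfl | rfl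
      · exact absurd hab (hni a hay hav)
      · exact hab
    by_cases hyj : G.Adj y j
    · right
      ext a
      simp only [SimpleGraph.mem_neighborSet, Finset.mem_coe]
      constructor
      · intro h
        exact hIn j hj a h.symm
      · intro ha
        by_cases hay : a = y
        · exact hay ▸ hyj.symm
        · exact (hKj a ha hay).symm
    · left
      ext a
      simp only [SimpleGraph.mem_neighborSet, Set.mem_sdiff, Finset.mem_coe]
      constructor
      · intro h
        refine ⟨hIn j hj a h.symm, fun hai => ?_⟩
        have hay : a ≠ y := by rintro rfl; exact hyj h.symm
        by_cases hav : a = v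
        · exact hvi (hav ▸ hai.symm)
        · exact hni a hay hav hai.symm
      · rintro ⟨ha, hai⟩
        have hay : a ≠ y := by rintro rfl; exact hai hxi.symm
        exact (hKj a ha hay).symm
end

section
/- Let G be a finite simple undirected graph with no isolated vertices admitting a split partition (K, I) where K is a clique, I is an independent set, and every vertex of K has at least one neighbor in I. If G is equimatchable, |I| ≥ 3, and |K| ≥ 2, then there exist vertices x ∈ K and y ∈ I such that N(z) = {x} for every z ∈ I − {y}, and either N(y) = K − {x} or N(y) = K, where N(u) denotes the set of neighbors of u in G. -/
open Finset

variable {V : Type*}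

def PM {V : Type*} (G : SimpleGraph V) (S : Finset V) : Prop :=
  ∃ M : Finset (Sym2 V), IsMatching G M ∧ (∀ v, (∃ e ∈ M, v ∈ e) ↔ v ∈ S) ∧ 2 * M.card = S.card

theorem PM.add {V : Type*} [DecidableEq V] {G : SimpleGraph V} {S : Finset V} (h : PM G S)
    {a b : V} (ha : a ∉ S) (hb : b ∉ S) (hab : G.Adj a b) : PM G (insert a (insert b S)) := by
  obtain ⟨M, ⟨h1, h2⟩, h3, h4⟩ := h
  have hne := hab.ne
  have hn : s(a, b) ∉ M := fun hm => ha ((h3 a).1 ⟨_, hm, by simp⟩)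
  refine ⟨insert s(a, b) M, ⟨?_, ?_⟩, ?_, ?_⟩
  · intro e he
    simp only [coe_insert, Set.mem_insert_iff] at he
    rcases he with rfl | he
    · exact hab
    · exact h1 he
  · have key : ∀ e ∈ M, ∀ v, v ∈ e → v ≠ a ∧ v ≠ b := by
      intro e he v hv
      have := (h3 v).1 ⟨e, he, hv⟩
      constructor <;> rintro rfl <;> contradiction
    intro e he f hf hef v hv hvf
    rw [Finset.mem_insert] at he hf
    rcases he with rfl | he <;> rcases hf with rfl | hf
    · exact hef rfl
    · have := key f hf v hvf
      rw [Sym2.mem_iff] at hv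
      tauto
    · have := key e he v hv
      rw [Sym2.mem_iff] at hvf
      tauto
    · exact h2 e he f hf hef v hv hvf
  · intro v
    simp only [Finset.mem_insert, exists_eq_or_imp, Sym2.mem_iff, h3, or_assoc]
  · rw [card_insert_of_notMem hn, card_insert_of_notMem, card_insert_of_notMem hb]
    · omega
    · simp [hne, ha]

theorem PM.clique {V : Type*} [DecidableEq V] {G : SimpleGraph V} (m : ℕ) :
    ∀ S : Finset V, G.IsClique (S : Set V) → S.card = 2 * m → PM G S := by
  induction m with
  | zero =>
    intro S _ hS
    have : S = ∅ := by simpa using hS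
    subst this
    exact ⟨∅, ⟨by simp, by simp⟩, by simp, by simp⟩
  | succ m ih =>
    intro S hc hS
    obtain ⟨a, ha, b, hb, hab⟩ := Finset.one_lt_card.1 (show 1 < S.card by omega)
    have hT : PM G ((S.erase a).erase b) := by
      apply ih
      · exact hc.subset (by intro x; simp; tauto)
      · rw [card_erase_of_mem (by simp [hb, Ne.symm hab]), card_erase_of_mem ha]; omega
    have := hT.add (a := a) (b := b) (by simp) (by simp) (hc ha hb hab)
    rwa [insert_erase (by simp [hb, Ne.symm hab]), insert_erase ha] at this

theorem PM.card_eq {V : Type*} {G : SimpleGraph V} (hEq : Equimatchable G) {K S T : Finset V}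
    (hK : ∀ u v, G.Adj u v → u ∈ K ∨ v ∈ K) (hS : PM G S) (hT : PM G T)
    (hKS : K ⊆ S) (hKT : K ⊆ T) : S.card = T.card := by
  have key : ∀ S M, (∀ v, (∃ e ∈ M, v ∈ e) ↔ v ∈ S) → K ⊆ S → IsMatching G M →
      IsMaximalMatching G M := by
    intro S M h hKS hM
    refine ⟨hM, ?_⟩
    intro e
    induction e with
    | _ u v =>
      intro he
      rcases hK u v he with hu | hu
      · obtain ⟨f, hf, hv⟩ := (h u).2 (hKS hu)
        exact ⟨f, hf, u, by simp, hv⟩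
      · obtain ⟨f, hf, hv⟩ := (h v).2 (hKS hu)
        exact ⟨f, hf, v, by simp, hv⟩
  obtain ⟨M, h1, h2, h3⟩ := hS
  obtain ⟨N, h4, h5, h6⟩ := hT
  have := hEq M N (key S M h2 hKS h1) (key T N h5 hKT h4)
  omega

theorem comb {V : Type*} (G : SimpleGraph V) (K I : Finset V)
    (h1 : ∀ k ∈ K, ∃ i ∈ I, G.Adj k i) (h2 : ∀ i ∈ I, ∃ k ∈ K, G.Adj k i)
    (no3 : ∀ a ∈ K, ∀ b ∈ K, ∀ c ∈ K, ∀ i ∈ I, ∀ j ∈ I, ∀ k ∈ I, a ≠ b → a ≠ c → b ≠ c →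
      i ≠ j → i ≠ k → j ≠ k → G.Adj a i → G.Adj b j → G.Adj c k → False)
    {a b c i j k : V} (ha : a ∈ K) (hb : b ∈ K) (hc : c ∈ K) (hi : i ∈ I) (hj : j ∈ I)
    (hk : k ∈ I) (hab : a ≠ b) (hac : a ≠ c) (hbc : b ≠ c) (hij : i ≠ j) (hik : i ≠ k)
    (hjk : j ≠ k) (hai : G.Adj a i) (hbj : G.Adj b j) (hcj : G.Adj c j) :
    (∀ z ∈ I, z ≠ j → ∀ w ∈ K, G.Adj w z ↔ w = a) ∧ (∀ w ∈ K, w ≠ a → G.Adj w j) := by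
  -- outer independent vertices see only a
  have A : ∀ z ∈ I, z ≠ i → z ≠ j → ∀ w ∈ K, G.Adj w z → w = a := by
    intro z hz hzi hzj w hw hwz
    by_contra hwa
    by_cases hwb : w = b
    · subst hwb
      exact no3 a ha w hb c hc i hi z hz j hj hab hac hbc (Ne.symm hzi) hij hzj hai hwz hcj
    · exact no3 a ha b hb w hw i hi j hj z hz hab (Ne.symm hwa) (Ne.symm hwb) hij (Ne.symm hzi)
        (Ne.symm hzj) hai hbj hwz
  have A' : ∀ z ∈ I, z ≠ i → z ≠ j → G.Adj a z := by
    intro z hz hzi hzj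
    obtain ⟨w, hw, hwz⟩ := h2 z hz
    rwa [← A z hz hzi hzj w hw hwz]
  have hak := A' k hk (Ne.symm hik) (Ne.symm hjk)
  have B : ∀ w ∈ K, w ≠ a → ¬ G.Adj w i := by
    intro w hw hwa hwi
    by_cases hwb : w = b
    · subst hwb
      exact no3 a ha w hb c hc k hk i hi j hj hab hac hbc (Ne.symm hik) (Ne.symm hjk) hij
        hak hwi hcj
    · exact no3 a ha w hw b hb k hk i hi j hj (Ne.symm hwa) hab hwb (Ne.symm hik) (Ne.symm hjk)
        hij hak hwi hbj
  constructor
  · intro z hz hzj w hw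
    by_cases hzi : z = i
    · subst hzi
      constructor
      · intro h
        by_contra h'
        exact B w hw h' h
      · rintro rfl; exact hai
    · constructor
      · exact A z hz hzi hzj w hw
      · rintro rfl; exact A' z hz hzi hzj
  · intro w hw hwa
    obtain ⟨z, hz, hwz⟩ := h1 w hw
    by_cases hzj : z = j
    · rwa [← hzj]
    · by_cases hzi : z = i
      · subst hzi; exact absurd hwz (B w hw hwa)
      · exact absurd (A z hz hzi hzj w hw hwz) hwa

theorem two {V : Type*} (G : SimpleGraph V) (K I : Finset V)
    (h1 : ∀ k ∈ K, ∃ i ∈ I, G.Adj k i) (h2 : ∀ i ∈ I, ∃ k ∈ K, G.Adj k i)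
    (hI : 1 < I.card) (hK : 1 < K.card) :
    ∃ a ∈ K, ∃ b ∈ K, ∃ i ∈ I, ∃ j ∈ I, a ≠ b ∧ i ≠ j ∧ G.Adj a i ∧ G.Adj b j := by
  obtain ⟨a, ha, b, hb, hab⟩ := Finset.one_lt_card.1 hK
  obtain ⟨i, hi, hai⟩ := h1 a ha
  obtain ⟨j, hj, hji⟩ := Finset.exists_mem_ne hI i
  obtain ⟨c, hc, hcj⟩ := h2 j hj
  by_cases hca : c = a
  · subst hca
    obtain ⟨k, hk, hbk⟩ := h1 b hb
    by_cases hki : k = i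
    · subst hki
      exact ⟨c, hc, b, hb, j, hj, k, hk, hab, hji, hcj, hbk⟩
    · exact ⟨c, hc, b, hb, i, hi, k, hk, hab, Ne.symm hki, hai, hbk⟩
  · exact ⟨a, ha, c, hc, i, hi, j, hj, Ne.symm hca, Ne.symm hji, hai, hcj⟩

theorem stmt_6 {V : Type*} [Fintype V] [DecidableEq V]
    (G : SimpleGraph V) [DecidableRel G.Adj]
    (hNoIso : ∀ v : V, ∃ w : V, G.Adj v w)
    (K I : Finset V)
    (hdisj : Disjoint K I) (hcover : K ∪ I = Finset.univ)
    (hclique : G.IsClique (K : Set V)) (hindep : IsIndepSet G (I : Set V))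
    (hKI : ∀ k ∈ K, ∃ i ∈ I, G.Adj k i)
    (hEq : Equimatchable G) (hI3 : 3 ≤ I.card) (hK2 : 2 ≤ K.card) :
    ∃ x ∈ K, ∃ y ∈ I,
      (∀ z ∈ I, z ≠ y → G.neighborSet z = {x}) ∧
      (G.neighborSet y = (K : Set V) \ {x} ∨ G.neighborSet y = (K : Set V)) := by
  have hKor : ∀ v, v ∈ K ∨ v ∈ I := fun v => by
    have := Finset.mem_univ v
    rwa [← hcover, Finset.mem_union] at this
  have hnot : ∀ v ∈ I, v ∉ K := fun v hv hk => Finset.disjoint_left.1 hdisj hk hv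
  have hedge : ∀ u v, G.Adj u v → u ∈ K ∨ v ∈ K := by
    intro u v h
    by_contra! hh
    exact hindep ((hKor u).resolve_left hh.1) ((hKor v).resolve_left hh.2) h.ne h
  have h2 : ∀ i ∈ I, ∃ k ∈ K, G.Adj k i := by
    intro i hi
    obtain ⟨w, hw⟩ := hNoIso i
    exact ⟨w, (hedge i w hw).resolve_left (hnot i hi), hw.symm⟩
  obtain ⟨a, ha, b, hb, i, hi, j, hj, hab, hij, hai, hbj⟩ :=
    two G K I hKI h2 (by omega) (by omega)
  have hai' : ∀ x ∈ K, ∀ y ∈ I, x ≠ y := by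
    rintro x hx y hy rfl
    exact hnot x hy hx
  have hodd : K.card % 2 = 1 := by
    by_contra hcon
    have hS : PM G K := PM.clique (K.card / 2) K hclique (by omega)
    have hc2 : ((K.erase a).erase b).card = K.card - 2 := by
      rw [card_erase_of_mem (by simp [hb, Ne.symm hab]), card_erase_of_mem ha]; omega
    have hT0 : PM G ((K.erase a).erase b) := PM.clique (K.card / 2 - 1) _
      (hclique.subset (by intro x; simp; tauto)) (by omega)
    have hT := (hT0.add (a := b) (b := j) (by simp) (by simp [hnot j hj]) hbj).add
      (a := a) (b := i) (by simp [hab, hai' a ha j hj])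
      (by simp [hnot i hi, hij, Ne.symm (hai' b hb i hi)]) hai
    have := PM.card_eq hEq hedge hS hT (fun x hx => hx) (by intro x; simp; tauto)
    have hlt : K.card < (insert a (insert i (insert b (insert j ((K.erase a).erase b))))).card := by
      apply Finset.card_lt_card
      rw [Finset.ssubset_iff_of_subset (by intro x; simp; tauto)]
      exact ⟨i, by simp, hnot i hi⟩
    omega
  have no3 : ∀ a ∈ K, ∀ b ∈ K, ∀ c ∈ K, ∀ i ∈ I, ∀ j ∈ I, ∀ k ∈ I, a ≠ b → a ≠ c → b ≠ c →
      i ≠ j → i ≠ k → j ≠ k → G.Adj a i → G.Adj b j → G.Adj c k → False := by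
    intro a ha b hb c hc i hi j hj k hk hab hac hbc hij hik hjk hai hbj hck
    have hca : (K.erase a).card = K.card - 1 := card_erase_of_mem ha
    have hS0 : PM G (K.erase a) := PM.clique (K.card / 2) _
      (hclique.subset (by intro x; simp; tauto)) (by omega)
    have hS := hS0.add (a := a) (b := i) (by simp) (by simp [hnot i hi]) hai
    have hm1 : b ∈ K.erase a := by simp [hb, Ne.symm hab]
    have hm2 : c ∈ (K.erase a).erase b := by simp [hc, Ne.symm hac, Ne.symm hbc]
    have hcb : ((K.erase a).erase b).card = (K.erase a).card - 1 := card_erase_of_mem hm1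
    have hcc : (((K.erase a).erase b).erase c).card = ((K.erase a).erase b).card - 1 :=
      card_erase_of_mem hm2
    have hT0 : PM G (((K.erase a).erase b).erase c) := PM.clique (K.card / 2 - 1) _
      (hclique.subset (by intro x; simp; tauto)) (by omega)
    have hT := ((hT0.add (a := c) (b := k) (by simp) (by simp [hnot k hk]) hck).add
      (a := b) (b := j) (by simp [hbc, hai' b hb k hk])
      (by simp [hnot j hj, hjk, Ne.symm (hai' c hc j hj)]) hbj).add
      (a := a) (b := i) (by simp [hab, hac, hai' a ha j hj, hai' a ha k hk])
      (by simp [hnot i hi, hij, hik, Ne.symm (hai' b hb i hi), Ne.symm (hai' c hc i hi)]) hai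
    have := PM.card_eq hEq hedge hS hT (by intro x; simp; tauto) (by intro x; simp; tauto)
    have hlt : (insert a (insert i (K.erase a))).card < (insert a (insert i (insert b (insert j
        (insert c (insert k (((K.erase a).erase b).erase c))))))).card := by
      apply Finset.card_lt_card
      rw [Finset.ssubset_iff_of_subset (by intro x; simp; tauto)]
      exact ⟨j, by simp, by simp [hnot j hj, Ne.symm hij, Ne.symm (hai' a ha j hj)]⟩
    omega
  obtain ⟨c, hc, hcab⟩ := Finset.exists_mem_notMem_of_card_lt_card (s := {a, b}) (t := K)
    (by have := Finset.card_le_two (a := a) (b := b); omega)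
  obtain ⟨k, hk, hkij⟩ := Finset.exists_mem_notMem_of_card_lt_card (s := {i, j}) (t := I)
    (by have := Finset.card_le_two (a := i) (b := j); omega)
  simp only [Finset.mem_insert, Finset.mem_singleton, not_or] at hcab hkij
  obtain ⟨hca, hcb⟩ := hcab
  obtain ⟨hki, hkj⟩ := hkij
  have fin : ∀ x ∈ K, ∀ y ∈ I, ((∀ z ∈ I, z ≠ y → ∀ w ∈ K, G.Adj w z ↔ w = x) ∧
      (∀ w ∈ K, w ≠ x → G.Adj w y)) → ∃ x ∈ K, ∃ y ∈ I,
      (∀ z ∈ I, z ≠ y → G.neighborSet z = {x}) ∧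
      (G.neighborSet y = (K : Set V) \ {x} ∨ G.neighborSet y = (K : Set V)) := by
    rintro x hx y hy ⟨p, q⟩
    have hN : ∀ z ∈ I, ∀ w, G.Adj z w → w ∈ K := fun z hz w h =>
      (hedge z w h).resolve_left (hnot z hz)
    refine ⟨x, hx, y, hy, ?_, ?_⟩
    · intro z hz hzy
      ext w
      simp only [SimpleGraph.mem_neighborSet, Set.mem_singleton_iff]
      constructor
      · intro h
        exact (p z hz hzy w (hN z hz w h)).1 h.symm
      · rintro rfl
        exact ((p z hz hzy w hx).2 rfl).symm
    · by_cases hxy : G.Adj x y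
      · right
        ext w
        simp only [SimpleGraph.mem_neighborSet, Finset.mem_coe]
        refine ⟨hN y hy w, fun hw => ?_⟩
        by_cases hwx : w = x
        · rw [hwx]; exact hxy.symm
        · exact (q w hw hwx).symm
      · left
        ext w
        simp only [SimpleGraph.mem_neighborSet, Set.mem_sdiff, Finset.mem_coe,
          Set.mem_singleton_iff]
        refine ⟨fun h => ⟨hN y hy w h, ?_⟩, fun hw => (q w hw.1 hw.2).symm⟩
        rintro rfl
        exact hxy h.symm
  obtain ⟨l, hl, hcl⟩ := hKI c hc
  by_cases hlj : l = j
  · subst hlj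
    exact fin a ha l hj (comb G K I hKI h2 no3 ha hb hc hi hj hk hab (Ne.symm hca) (Ne.symm hcb)
      hij (Ne.symm hki) (Ne.symm hkj) hai hbj hcl)
  · by_cases hli : l = i
    · subst hli
      exact fin b hb l hi (comb G K I hKI h2 no3 hb ha hc hj hi hk (Ne.symm hab) (Ne.symm hcb)
        (Ne.symm hca) (Ne.symm hij) (Ne.symm hkj) (Ne.symm hki) hbj hai hcl)
    · exact (no3 a ha b hb c hc i hi j hj l hl hab (Ne.symm hca) (Ne.symm hcb) hij (Ne.symm hli)
        (Ne.symm hlj) hai hbj hcl).elim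
end

section
/- Let G be a finite simple undirected graph on n ≥ 4 vertices with no isolated vertices, let r be the number of vertices of G of degree 1 and p the number of vertices of degree n − 1. Then G is an equimatchable split graph if and only if at least one of the following holds: (i) p = n; (ii) r = n − 1 and p = 1; (iii) p = 1, r ≥ 2, n − r is even, and every vertex has degree 1, n − r − 1, or n − 1; (iv) p = 0, r ≥ 2, n − r is even, and there exist non-adjacent vertices x and y with d(x) = n − 2 and d(y) = n − r − 2 such that every vertex other than x and y has degree 1 or n − r − 1; (v) n is odd and there exist two vertices x and y with d(x) + d(y) = p + n − 2 such that every vertex other than x and y has degree n − 1 or n − 2. -/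
open Finset

variable {V : Type*}

section helpers
set_option linter.unusedSectionVars false
variable {V : Type*} [Fintype V] [DecidableEq V] {G : SimpleGraph V}

/-- `M` is a matching covering exactly the vertex set `S`. -/
def Cov (G : SimpleGraph V) (M : Finset (Sym2 V)) (S : Finset V) : Prop :=
  IsMatching G M ∧ ∀ v, v ∈ S ↔ ∃ e ∈ M, v ∈ e

lemma cov_card {M : Finset (Sym2 V)} {S : Finset V} (h : Cov G M S) : S.card = 2 * M.card := by
  obtain ⟨⟨hE, hD⟩, hS⟩ := h
  have : S = M.biUnion (fun e => e.toFinset) := by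
    ext v
    simp [hS]
  rw [this, Finset.card_biUnion]
  · rw [Finset.sum_const_nat (m := 2), mul_comm]
    intro e he
    apply Sym2.card_toFinset_of_not_isDiag
    exact G.not_isDiag_of_mem_edgeSet (hE he)
  · intro e he f hf hef
    rw [Function.onFun, Finset.disjoint_left]
    intro v hv hv'
    simp at hv hv'
    exact hD e he f hf hef v hv hv'

lemma cov_empty : Cov G ∅ ∅ := by
  simp [Cov, IsMatching]

lemma cov_insert {M : Finset (Sym2 V)} {S : Finset V} (h : Cov G M S) {u v : V}
    (hu : u ∉ S) (hv : v ∉ S) (huv : G.Adj u v) :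
    Cov G (insert s(u, v) M) (insert u (insert v S)) := by
  obtain ⟨⟨hE, hD⟩, hS⟩ := h
  refine ⟨⟨?_, ?_⟩, ?_⟩
  · intro e he
    simp at he
    rcases he with rfl | he
    · simpa using huv
    · exact hE he
  · have key : ∀ e ∈ M, ∀ w, w ∈ e → w ∉ s(u, v) := by
      intro e he w hw hw'
      have : w ∈ S := (hS w).2 ⟨e, he, hw⟩
      simp at hw'
      rcases hw' with rfl | rfl
      · exact hu this
      · exact hv this
    intro e he f hf hef w hw hw'
    rw [Finset.mem_insert] at he hf
    rcases he with rfl | he <;> rcases hf with rfl | hf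
    · exact hef rfl
    · exact key f hf w hw' hw
    · exact key e he w hw hw'
    · exact hD e he f hf hef w hw hw'
  · intro w
    simp [hS]
    tauto

lemma cov_clique (k : ℕ) : ∀ {M : Finset (Sym2 V)} {S T : Finset V}, Cov G M S →
    Disjoint S T → G.IsClique (T : Set V) → T.card = 2 * k → ∃ M', Cov G M' (S ∪ T) := by
  induction k with
  | zero =>
    intro M S T h _ _ hT
    have : T = ∅ := by simpa using hT
    exact ⟨M, by simpa [this] using h⟩
  | succ k ih =>
    intro M S T h hd hc hT
    obtain ⟨a, ha, b, hb, hab⟩ := Finset.one_lt_card.1 (by omega : 1 < T.card)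
    have hd' := Finset.disjoint_left.1 hd
    have h1 := cov_insert h (fun h => hd' h ha) (fun h => hd' h hb)
      (hc (by simpa using ha) (by simpa using hb) hab)
    obtain ⟨M', hM'⟩ := ih (T := (T.erase a).erase b) h1 (by
      rw [Finset.disjoint_left]
      intro w hw hw'
      simp at hw hw'
      rcases hw with h | h | h
      · exact hw'.2.1 h
      · exact hw'.1 h
      · exact hd' h hw'.2.2) (hc.subset (by intro w; simp; tauto)) (by
      rw [Finset.card_erase_of_mem (by simp [hb, hab.symm]), Finset.card_erase_of_mem ha]
      omega)
    refine ⟨M', ?_⟩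
    convert hM' using 1
    ext w
    by_cases h1 : w = a <;> by_cases h2 : w = b <;> simp [h1, h2, ha, hb]

lemma cov_maximal {M : Finset (Sym2 V)} {S : Finset V} (h : Cov G M S) :
    IsMaximalMatching G M ↔ ∀ u v, u ∉ S → v ∉ S → ¬ G.Adj u v := by
  constructor
  · rintro ⟨_, hm⟩ u v hu hv huv
    obtain ⟨f, hf, w, hw, hw'⟩ := hm s(u, v) huv
    have : w ∈ S := (h.2 w).2 ⟨f, hf, hw'⟩
    simp at hw
    rcases hw with rfl | rfl <;> contradiction
  · intro hi
    refine ⟨h.1, ?_⟩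
    intro e
    induction e with | _ u v
    intro huv
    by_contra hcon
    push Not at hcon
    refine hi u v ?_ ?_ huv
    · intro hu
      obtain ⟨f, hf, hw⟩ := (h.2 u).1 hu
      exact hcon f hf u (by simp) hw
    · intro hu
      obtain ⟨f, hf, hw⟩ := (h.2 v).1 hu
      exact hcon f hf v (by simp) hw

lemma equi_of_cov (h : ∀ M S M' S', Cov G M S → Cov G M' S' →
    (∀ u v, u ∉ S → v ∉ S → ¬ G.Adj u v) → (∀ u v, u ∉ S' → v ∉ S' → ¬ G.Adj u v) →
    S.card = S'.card) : Equimatchable G := by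
  have key : ∀ M, IsMatching G M → Cov G M (M.biUnion (fun e => e.toFinset)) := by
    intro M hM
    exact ⟨hM, by simp⟩
  intro M M' hM hM'
  have c := key M hM.1
  have c' := key M' hM'.1
  have := h _ _ _ _ c c' ((cov_maximal c).1 hM) ((cov_maximal c').1 hM')
  rw [cov_card c, cov_card c'] at this
  omega

lemma equi_cov (h : Equimatchable G) {M M' : Finset (Sym2 V)} {S S' : Finset V}
    (c : Cov G M S) (c' : Cov G M' S') (hS : ∀ u v, u ∉ S → v ∉ S → ¬ G.Adj u v)
    (hS' : ∀ u v, u ∉ S' → v ∉ S' → ¬ G.Adj u v) : S.card = S'.card := by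
  rw [cov_card c, cov_card c', h M M' ((cov_maximal c).2 hS) ((cov_maximal c').2 hS')]

lemma cov_leaf {M : Finset (Sym2 V)} {S : Finset V} (h : Cov G M S) {u x : V}
    (hu : u ∈ S) (hx : ∀ w, G.Adj u w → w = x) : s(u, x) ∈ M := by
  obtain ⟨e, he, hue⟩ := (h.2 u).1 hu
  obtain ⟨w, rfl⟩ := Sym2.mem_iff_exists.1 hue
  have : G.Adj u w := h.1.1 he
  rwa [← hx w this]

/-- pendant structure -/
lemma equi_pendant (L : Finset V) (x : V) (hL : L.Nonempty)
    (h1 : ∀ u ∈ L, ∀ w, G.Adj u w ↔ w = x) (hx : x ∉ L)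
    (hc : ∀ a b, a ∉ L → b ∉ L → a ≠ x → b ≠ x → a ≠ b → G.Adj a b)
    (he : Even (Lᶜ.card)) : Equimatchable G := by
  have key : ∀ M S, Cov G M S → (∀ u v, u ∉ S → v ∉ S → ¬ G.Adj u v) →
      S.card = Lᶜ.card := by
    intro M S h hS
    have hxS : x ∈ S := by
      by_contra hxS
      obtain ⟨u, hu⟩ := hL
      by_cases huS : u ∈ S
      · have := cov_leaf h huS (fun w => (h1 u hu w).1)
        exact hxS ((h.2 x).2 ⟨_, this, by simp⟩)
      · exact hS u x huS hxS ((h1 u hu x).2 rfl)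
    have a1 : (S ∩ L).card ≤ 1 := by
      rw [Finset.card_le_one]
      intro a ha b hb
      rw [Finset.mem_inter] at ha hb
      have ea := cov_leaf h ha.1 (fun w => (h1 a ha.2 w).1)
      have eb := cov_leaf h hb.1 (fun w => (h1 b hb.2 w).1)
      by_contra hab
      have hne : s(a, x) ≠ s(b, x) := by
        intro h
        simp at h
        grind
      exact h.1.2 _ ea _ eb hne x (by simp) (by simp)
    have a2 : (Lᶜ \ S).card ≤ 1 := by
      rw [Finset.card_le_one]
      intro a ha b hb
      simp at ha hb
      by_contra hab
      exact hS a b ha.2 hb.2 (hc a b ha.1 hb.1 (by rintro rfl; exact ha.2 hxS)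
        (by rintro rfl; exact hb.2 hxS) hab)
    have a3 := Finset.card_inter_add_card_sdiff S L
    have a4 := Finset.card_inter_add_card_sdiff Lᶜ S
    have a5 : Lᶜ ∩ S = S \ L := by ext; simp; tauto
    rw [a5] at a4
    have a6 := cov_card h
    obtain ⟨m, hm⟩ := he
    omega
  apply equi_of_cov
  intro M S M' S' h h' hS hS'
  rw [key M S h hS, key M' S' h' hS']

lemma equi_complete (h : ∀ a b, a ≠ b → G.Adj a b) : Equimatchable G := by
  have key : ∀ M S, Cov G M S → (∀ u v, u ∉ S → v ∉ S → ¬ G.Adj u v) → Sᶜ.card ≤ 1 := by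
    intro M S _ hS
    rw [Finset.card_le_one]
    intro a ha b hb
    simp at ha hb
    by_contra hab
    exact hS a b ha hb (h a b hab)
  apply equi_of_cov
  intro M S M' S' c c' hS hS'
  have := key M S c hS
  have := key M' S' c' hS'
  have := cov_card c
  have := cov_card c'
  have := S.card_add_card_compl
  have := S'.card_add_card_compl
  omega

lemma equi_odd (hodd : Odd (Fintype.card V)) (x y : V)
    (hc : ∀ a b, a ≠ x → a ≠ y → b ≠ x → b ≠ y → a ≠ b → G.Adj a b)
    (hd : ∀ a, a ≠ x → a ≠ y → G.Adj a x ∨ G.Adj a y) : Equimatchable G := by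
  have key : ∀ M S, Cov G M S → (∀ u v, u ∉ S → v ∉ S → ¬ G.Adj u v) → Sᶜ.card ≤ 2 := by
    intro M S _ hS
    by_contra hcon
    obtain ⟨a, ha, b, hb, c, hcc, hab, hac, hbc⟩ := Finset.two_lt_card.1 (not_le.1 hcon)
    simp only [Finset.mem_compl] at ha hb hcc
    have h1 := hS a b ha hb
    have h2 := hS a c ha hcc
    have h3 := hS b c hb hcc
    have h1' := hS b a hb ha
    have h2' := hS c a hcc ha
    have h3' := hS c b hcc hb
    have := hc a b
    have := hc a c
    have := hc b c
    have := hd a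
    have := hd b
    have := hd c
    clear hc hd hS hcon hodd
    by_cases a = x <;> by_cases a = y <;> by_cases b = x <;> by_cases b = y <;>
      by_cases c = x <;> by_cases c = y <;> simp_all
  apply equi_of_cov
  intro M S M' S' c c' hS hS'
  have := key M S c hS
  have := key M' S' c' hS'
  have := cov_card c
  have := cov_card c'
  have := S.card_add_card_compl
  have := S'.card_add_card_compl
  obtain ⟨m, hm⟩ := hodd
  omega

/-! Degree lemmas -/

lemma compl_deg [DecidableRel G.Adj] (v : V) :
    (univ.filter fun w => ¬ G.Adj v w ∧ w ≠ v).card + G.degree v + 1 = Fintype.card V := by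
  rw [← G.card_neighborFinset_eq_degree]
  have h1 : (univ.filter fun w => ¬ G.Adj v w ∧ w ≠ v) = (insert v (G.neighborFinset v))ᶜ := by
    ext w; simp; tauto
  have h2 : (insert v (G.neighborFinset v)).card = (G.neighborFinset v).card + 1 :=
    Finset.card_insert_of_notMem (by simp)
  have := (insert v (G.neighborFinset v)).card_add_card_compl
  rw [h1]
  omega

lemma full_iff [DecidableRel G.Adj] (v : V) :
    G.degree v = Fintype.card V - 1 ↔ ∀ w, w ≠ v → G.Adj v w := by
  have := compl_deg (G := G) v
  have h : (univ.filter fun w => ¬ G.Adj v w ∧ w ≠ v).card = 0 ↔ ∀ w, w ≠ v → G.Adj v w := by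
    rw [Finset.card_eq_zero, Finset.filter_eq_empty_iff]
    simp
    constructor
    · intro h w hw
      by_contra h'
      exact hw (h h')
    · intro h w hw
      by_contra h'
      exact hw (h w h')
  rw [← h]
  omega

lemma conearly [DecidableRel G.Adj] (v : V) :
    Fintype.card V - 2 ≤ G.degree v ↔
      ∀ a b, a ≠ v → b ≠ v → ¬ G.Adj v a → ¬ G.Adj v b → a = b := by
  have := compl_deg (G := G) v
  have h : (univ.filter fun w => ¬ G.Adj v w ∧ w ≠ v).card ≤ 1 ↔
      ∀ a b, a ≠ v → b ≠ v → ¬ G.Adj v a → ¬ G.Adj v b → a = b := by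
    rw [Finset.card_le_one]
    simp
    grind
  rw [← h]
  omega

lemma deg_one [DecidableRel G.Adj] {v x : V} (h : G.degree v = 1) (hx : G.Adj v x) (w : V) :
    G.Adj v w ↔ w = x := by
  rw [← G.card_neighborFinset_eq_degree, Finset.card_eq_one] at h
  obtain ⟨a, ha⟩ := h
  have h1 : ∀ w, G.Adj v w ↔ w = a := by
    intro w
    rw [← G.mem_neighborFinset, ha, Finset.mem_singleton]
  have := (h1 x).1 hx
  rw [h1, this]

/-- vertex adjacent only inside `S` with large degree is adjacent to all of `S`. -/
lemma deg_inside [DecidableRel G.Adj] {v : V} (S : Finset V) (hv : v ∈ S)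
    (h : ∀ w, G.Adj v w → w ∈ S) (hd : G.degree v = S.card - 1) :
    ∀ w ∈ S, w ≠ v → G.Adj v w := by
  have h1 : G.neighborFinset v = S.erase v := by
    apply Finset.eq_of_subset_of_card_le
    · intro w hw
      rw [G.mem_neighborFinset] at hw
      exact Finset.mem_erase.2 ⟨hw.ne', h w hw⟩
    · rw [Finset.card_erase_of_mem hv, G.card_neighborFinset_eq_degree, hd]
  intro w hw hne
  rw [← G.mem_neighborFinset, h1]
  exact Finset.mem_erase.2 ⟨hne, hw⟩

lemma deg_eq [DecidableRel G.Adj] {v : V} (S : Finset V)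
    (h : ∀ w, G.Adj v w ↔ w ∈ S) : G.degree v = S.card := by
  rw [← G.card_neighborFinset_eq_degree]
  congr 1
  ext w
  simp [h]

end helpers

section back
set_option linter.unusedSectionVars false
variable {V : Type*} [Fintype V] [DecidableEq V] {G : SimpleGraph V}

lemma split_of (K : Finset V) (h1 : ∀ a ∈ K, ∀ b ∈ K, a ≠ b → G.Adj a b)
    (h2 : ∀ a b, a ∉ K → b ∉ K → ¬ G.Adj a b) : IsSplitGraph G := by
  refine ⟨(K : Set V), (K : Set V)ᶜ, disjoint_compl_right, by simp, ?_, ?_⟩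
  · intro a ha b hb hab
    exact h1 a ha b hb hab
  · intro a ha b hb _
    exact h2 a b ha hb

/-- all-pairs full graph -/
lemma back1 [DecidableRel G.Adj]
    (hp : (univ.filter fun v : V => G.degree v = Fintype.card V - 1).card = Fintype.card V) :
    Equimatchable G ∧ IsSplitGraph G := by
  have h : ∀ a b, a ≠ b → G.Adj a b := by
    intro a b hab
    have := (Finset.card_eq_iff_eq_univ _).1 hp
    have h2 : a ∈ (univ.filter fun v : V => G.degree v = Fintype.card V - 1) := by
      rw [this]; simp
    simp only [Finset.mem_filter, full_iff] at h2
    exact h2.2 b hab.symm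
  exact ⟨equi_complete h, split_of univ (fun a _ b _ => h a b) (by simp)⟩

lemma back2 [DecidableRel G.Adj] (hn4 : 4 ≤ Fintype.card V)
    (hr : (univ.filter fun v : V => G.degree v = 1).card = Fintype.card V - 1)
    (hp : (univ.filter fun v : V => G.degree v = Fintype.card V - 1).card = 1) :
    Equimatchable G ∧ IsSplitGraph G := by
  obtain ⟨x, hx⟩ := Finset.card_eq_one.1 hp
  have hxd : G.degree x = Fintype.card V - 1 := by
    have : x ∈ (univ.filter fun v : V => G.degree v = Fintype.card V - 1) := by rw [hx]; simp
    simpa using this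
  have hxf := (full_iff x).1 hxd
  have hleaf : ∀ v, v ≠ x → G.degree v = 1 := by
    have : (univ.filter fun v : V => G.degree v = 1) = univ.erase x := by
      apply Finset.eq_of_subset_of_card_le
      · intro v hv
        simp at hv ⊢
        rintro rfl
        omega
      · rw [Finset.card_erase_of_mem (mem_univ _), hr, Finset.card_univ]
    intro v hv
    have h2 : v ∈ univ.erase x := by simp [hv]
    rw [← this] at h2
    simpa using h2
  have h1 : ∀ v, v ≠ x → ∀ w, G.Adj v w ↔ w = x := fun v hv =>
    deg_one (hleaf v hv) (hxf v hv).symm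
  obtain ⟨z, hz⟩ : ∃ z, z ≠ x := Fintype.exists_ne_of_one_lt_card (by omega) x
  constructor
  · have hc : (({x, z} : Finset V)).card = 2 := Finset.card_pair hz.symm
    refine equi_pendant ({x, z}ᶜ) x ?_ ?_ (by simp) ?_ ?_
    · rw [← Finset.card_pos, Finset.card_compl, hc]
      omega
    · intro u hu
      apply h1
      simp at hu
      tauto
    · intro a b ha hb
      simp at ha hb
      grind
    · rw [compl_compl, hc]; simp
  · apply split_of {x}
    · simp
    · intro a b ha hb hab
      simp at ha hb
      exact hb ((h1 a ha b).1 hab)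

lemma back3 [DecidableRel G.Adj] (hn4 : 4 ≤ Fintype.card V) (r : ℕ)
    (hr : r = (univ.filter fun v : V => G.degree v = 1).card)
    (hp : (univ.filter fun v : V => G.degree v = Fintype.card V - 1).card = 1)
    (hr2 : 2 ≤ r) (he : Even (Fintype.card V - r))
    (hd : ∀ v : V, G.degree v = 1 ∨ G.degree v = Fintype.card V - r - 1 ∨
      G.degree v = Fintype.card V - 1) :
    Equimatchable G ∧ IsSplitGraph G := by
  obtain ⟨x, hx⟩ := Finset.card_eq_one.1 hp
  have hx' : ∀ v, G.degree v = Fintype.card V - 1 ↔ v = x := by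
    intro v
    have h := Finset.ext_iff.1 hx v
    simpa using h
  have hxd : G.degree x = Fintype.card V - 1 := (hx' x).2 rfl
  have hxf := (full_iff x).1 hxd
  set L := (univ.filter fun v : V => G.degree v = 1) with hL
  have hLm : ∀ v, v ∈ L ↔ G.degree v = 1 := by simp [hL]
  have hxL : x ∉ L := by
    rw [hLm]; omega
  have hLc : Lᶜ.card = Fintype.card V - r := by rw [Finset.card_compl, hr]
  have h1 : ∀ v ∈ L, ∀ w, G.Adj v w ↔ w = x := by
    intro v hv
    have hvx : v ≠ x := by rintro rfl; exact hxL hv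
    exact deg_one ((hLm v).1 hv) (hxf v hvx).symm
  have hcl : ∀ a b, a ∉ L → b ∉ L → a ≠ b → G.Adj a b := by
    intro a b ha hb hab
    by_cases hax : a = x
    · subst hax
      exact hxf b hab.symm
    · have had : G.degree a = Lᶜ.card - 1 := by
        have := hd a
        have := hx' a
        have := hLm a
        rw [hLc]
        tauto
      refine deg_inside Lᶜ (by simpa using ha) ?_ had b (by simpa using hb) hab.symm
      intro w hw
      rw [Finset.mem_compl]
      intro hwL
      exact hax ((h1 w hwL a).1 hw.symm)
  constructor
  · refine equi_pendant L x ?_ h1 hxL (fun a b ha hb _ _ => hcl a b ha hb) (hLc ▸ he)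
    rw [← Finset.card_pos]; omega
  · apply split_of Lᶜ
    · intro a ha b hb
      simp only [Finset.mem_compl] at ha hb
      exact hcl a b ha hb
    · intro a b ha hb hab
      simp only [Finset.mem_compl, not_not] at ha hb
      rw [h1 a ha b] at hab
      exact hxL (hab ▸ hb)

lemma back4 [DecidableRel G.Adj] (hn4 : 4 ≤ Fintype.card V) (r : ℕ)
    (hr : r = (univ.filter fun v : V => G.degree v = 1).card)
    (hr2 : 2 ≤ r) (he : Even (Fintype.card V - r))
    (x y : V) (hxy : x ≠ y) (hna : ¬ G.Adj x y) (hdx : G.degree x = Fintype.card V - 2)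
    (hdy : G.degree y = Fintype.card V - r - 2)
    (hd : ∀ v : V, v ≠ x → v ≠ y → (G.degree v = 1 ∨ G.degree v = Fintype.card V - r - 1)) :
    Equimatchable G ∧ IsSplitGraph G := by
  have hxf : ∀ w, w ≠ x → w ≠ y → G.Adj x w := by
    intro w hwx hwy
    by_contra h
    exact hwy ((conearly x).1 hdx.ge w y hwx hxy.symm h hna)
  set L := (univ.filter fun v : V => G.degree v = 1) with hL
  have hLm : ∀ v, v ∈ L ↔ G.degree v = 1 := by simp [hL]
  have hxL : x ∉ L := by
    rw [hLm]; omega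
  have hyL : y ∉ L := by
    rw [hLm]
    intro h
    obtain ⟨m, hm⟩ := he
    omega
  have hLc : Lᶜ.card = Fintype.card V - r := by rw [Finset.card_compl, hr]
  have h1 : ∀ v ∈ L, ∀ w, G.Adj v w ↔ w = x := by
    intro v hv
    have hvx : v ≠ x := by rintro rfl; exact hxL hv
    have hvy : v ≠ y := by rintro rfl; exact hyL hv
    exact deg_one ((hLm v).1 hv) (hxf v hvx hvy).symm
  have hcl : ∀ a b, a ∉ L → b ∉ L → a ≠ x → a ≠ y → a ≠ b → G.Adj a b := by
    intro a b ha hb hax hay hab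
    have had : G.degree a = Lᶜ.card - 1 := by
      have := hd a
      have := hLm a
      rw [hLc]
      tauto
    refine deg_inside Lᶜ (by simpa using ha) ?_ had b (by simpa using hb) hab.symm
    intro w hw
    rw [Finset.mem_compl]
    intro hwL
    exact hax ((h1 w hwL a).1 hw.symm)
  constructor
  · refine equi_pendant L x ?_ h1 hxL ?_ (hLc ▸ he)
    · rw [← Finset.card_pos]; omega
    · intro a b ha hb hax hbx hab
      by_cases hay : a = y
      · exact (hcl b a hb ha hbx (hay ▸ hab.symm) hab.symm).symm
      · exact hcl a b ha hb hax hay hab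
  · apply split_of (Lᶜ.erase y)
    · intro a ha b hb hab
      simp only [Finset.mem_compl, Finset.mem_erase] at ha hb
      by_cases hax : a = x
      · subst hax
        exact hxf b hab.symm hb.1
      · exact hcl a b ha.2 hb.2 hax ha.1 hab
    · intro a b ha hb hab
      simp only [Finset.mem_compl, Finset.mem_erase, not_and, not_not] at ha hb
      by_cases hay : a = y
      · subst hay
        have hbL := hb hab.ne'
        have := (h1 b hbL a).1 hab.symm
        exact hxy this.symm
      · have := (h1 a (ha hay) b).1 hab
        subst this
        exact hxL (hb hxy)

/-- `d(x) + d(y)` as a sum over the other vertices. -/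
lemma deg_sum [DecidableRel G.Adj] (x y : V) (hxy : x ≠ y) :
    G.degree x + G.degree y = (∑ v ∈ (univ.erase x).erase y,
      ((if G.Adj x v then 1 else 0) + (if G.Adj y v then 1 else 0))) +
      (if G.Adj x y then 2 else 0) := by
  have key : ∀ a, G.degree a = ∑ v, if G.Adj a v then 1 else 0 := by
    intro a
    rw [← G.card_neighborFinset_eq_degree, ← Finset.card_filter]
    congr 1
    ext w; simp
  rw [key x, key y, ← Finset.sum_add_distrib,
    ← Finset.add_sum_erase univ _ (mem_univ x),
    ← Finset.add_sum_erase (univ.erase x) _ (show y ∈ univ.erase x by simp [hxy.symm])]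
  simp only [SimpleGraph.irrefl, if_false, G.adj_comm y x]
  split_ifs <;> omega

lemma p_sum [DecidableRel G.Adj] (x y : V) (hxy : x ≠ y) (P : V → Prop) [DecidablePred P] :
    (univ.filter P).card = (∑ v ∈ (univ.erase x).erase y, if P v then 1 else 0) +
      (if P x then 1 else 0) + (if P y then 1 else 0) := by
  rw [Finset.card_filter, 
    ← Finset.add_sum_erase univ _ (mem_univ x),
    ← Finset.add_sum_erase (univ.erase x) _ (show y ∈ univ.erase x by simp [hxy.symm])]
  omega

lemma card_others (x y : V) (hxy : x ≠ y) :
    ((univ.erase x).erase y).card = Fintype.card V - 2 := by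
  rw [Finset.card_erase_of_mem (by simp [hxy.symm]), Finset.card_erase_of_mem (by simp),
    Finset.card_univ]
  omega

lemma back5 [DecidableRel G.Adj] (hn4 : 4 ≤ Fintype.card V) (p : ℕ)
    (hp : p = (univ.filter fun v : V => G.degree v = Fintype.card V - 1).card)
    (hodd : Odd (Fintype.card V)) (x y : V) (hxy : x ≠ y)
    (hs : G.degree x + G.degree y = p + Fintype.card V - 2)
    (hd : ∀ v : V, v ≠ x → v ≠ y →
      (G.degree v = Fintype.card V - 1 ∨ G.degree v = Fintype.card V - 2)) :
    Equimatchable G ∧ IsSplitGraph G := by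
  have hnear : ∀ v, v ≠ x → v ≠ y → ∀ a b, a ≠ v → b ≠ v → ¬ G.Adj v a → ¬ G.Adj v b → a = b := by
    intro v hvx hvy
    apply (conearly v).1
    have := hd v hvx hvy
    omega
  have e1 := deg_sum (G := G) x y hxy
  have e2 := p_sum (G := G) x y hxy (fun v : V => G.degree v = Fintype.card V - 1)
  have e3 := card_others x y hxy
  rw [← hp] at e2
  have hle : ∀ v ∈ (univ.erase x).erase y,
      (1 + if G.degree v = Fintype.card V - 1 then 1 else 0) ≤
      ((if G.Adj x v then 1 else 0) + (if G.Adj y v then 1 else 0)) := by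
    intro v hv
    simp only [Finset.mem_erase, Finset.mem_univ, and_true] at hv
    have h1 := hnear v hv.2 hv.1 x y (Ne.symm hv.2) (Ne.symm hv.1)
    have hf := full_iff (G := G) v
    have h2 : G.degree v = Fintype.card V - 1 → G.Adj x v := fun h =>
      (hf.1 h x (Ne.symm hv.2)).symm
    have h3 : G.degree v = Fintype.card V - 1 → G.Adj y v := fun h =>
      (hf.1 h y (Ne.symm hv.1)).symm
    rw [G.adj_comm v x, G.adj_comm v y] at h1
    by_cases hx : G.Adj x v <;> by_cases hy : G.Adj y v <;>
      by_cases hq : G.degree v = Fintype.card V - 1 <;> simp [hx, hy, hq] <;> tauto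
  have hsum := Finset.sum_le_sum hle
  have hone : ∑ v ∈ (univ.erase x).erase y,
      (1 + if G.degree v = Fintype.card V - 1 then 1 else 0) =
      Fintype.card V - 2 + ∑ v ∈ (univ.erase x).erase y,
        (if G.degree v = Fintype.card V - 1 then 1 else 0) := by
    rw [Finset.sum_add_distrib]
    simp [e3]
  by_cases hfull : G.degree x = Fintype.card V - 1 ∨ G.degree y = Fintype.card V - 1
  · have hadj : G.Adj x y := by
      rcases hfull with h | h
      · exact (full_iff x).1 h y hxy.symm
      · exact ((full_iff y).1 h x hxy).symm
    rw [if_pos hadj] at e1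
    apply back1
    rw [← hp]
    have hx : G.degree x = Fintype.card V - 1 := by
      by_contra h
      rw [if_neg h] at e2
      split_ifs at e2 <;> omega
    have hy : G.degree y = Fintype.card V - 1 := by
      by_contra h
      rw [if_neg h] at e2
      split_ifs at e2 <;> omega
    omega
  · push Not at hfull
    rw [if_neg hfull.1, if_neg hfull.2] at e2
    have hna : ¬ G.Adj x y := by
      intro h
      rw [if_pos h] at e1
      omega
    rw [if_neg hna] at e1
    have heq := (Finset.sum_eq_sum_iff_of_le hle).1 (by omega)
    have hcl : ∀ a b, a ≠ x → a ≠ y → b ≠ x → b ≠ y → a ≠ b → G.Adj a b := by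
      intro a b hax hay hbx hby hab
      by_contra hnab
      have h1 := hnear a hax hay b x hab.symm hax.symm hnab
      have h2 := hnear a hax hay b y hab.symm hay.symm hnab
      have hf := full_iff (G := G) a
      have h3 := heq a (by simp [hax, hay])
      have ha1 : G.Adj a x := by by_contra h; exact hbx (h1 h)
      have ha2 : G.Adj a y := by by_contra h; exact hby (h2 h)
      rw [if_pos ha1.symm, if_pos ha2.symm] at h3
      have : G.degree a = Fintype.card V - 1 := by
        by_contra h
        rw [if_neg h] at h3
        omega
      exact hnab (hf.1 this b hab.symm)
    constructor
    · refine equi_odd hodd x y hcl ?_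
      intro a hax hay
      have := hnear a hax hay x y hax.symm hay.symm
      by_contra h
      push Not at h
      exact hxy (this h.1 h.2)
    · apply split_of ((univ.erase x).erase y)
      · intro a ha b hb
        simp only [Finset.mem_erase, Finset.mem_univ, and_true] at ha hb
        exact hcl a b ha.2 ha.1 hb.2 hb.1
      · intro a b ha hb hab
        simp only [Finset.mem_erase, Finset.mem_univ, and_true] at ha hb
        have hab' := hab.symm
        have := hab.ne
        have : ¬ G.Adj y x := fun h => hna h.symm
        grind

end back

section fwd
set_option linter.unusedSectionVars false
variable {V : Type*} [Fintype V] [DecidableEq V] {G : SimpleGraph V}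

lemma split_max (h : IsSplitGraph G) : ∃ K : Finset V,
    (∀ a ∈ K, ∀ b ∈ K, a ≠ b → G.Adj a b) ∧ (∀ a b, a ∉ K → b ∉ K → ¬ G.Adj a b) ∧
    (∀ u, u ∉ K → ∃ w ∈ K, ¬ G.Adj u w) := by
  classical
  obtain ⟨K, I, _, hu, hK, hI⟩ := h
  have hI' : ∀ a b, a ∉ K → b ∉ K → ¬ G.Adj a b := by
    intro a b ha hb hab
    have h1 : a ∈ K ∪ I := by rw [hu]; trivial
    have h2 : b ∈ K ∪ I := by rw [hu]; trivial
    exact hI (h1.resolve_left ha) (h2.resolve_left hb) hab.ne hab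
  by_cases hmax : ∀ u, u ∉ K → ∃ w ∈ K, ¬ G.Adj u w
  · refine ⟨K.toFinset, ?_, ?_, ?_⟩
    · intro a ha b hb
      simp at ha hb
      exact hK ha hb
    · simpa using hI'
    · simpa using hmax
  · push Not at hmax
    obtain ⟨u, hu, huK⟩ := hmax
    refine ⟨insert u K.toFinset, ?_, ?_, ?_⟩
    · intro a ha b hb hab
      simp at ha hb
      rcases ha with rfl | ha <;> rcases hb with rfl | hb
      · exact absurd rfl hab
      · exact huK b hb
      · exact (huK a ha).symm
      · exact hK ha hb hab
    · intro a b ha hb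
      simp at ha hb
      exact hI' a b ha.2 hb.2
    · intro v hv
      simp at hv
      exact ⟨u, by simp, hI' v u hv.2 hu⟩

lemma fwd5 [DecidableRel G.Adj] (hn4 : 4 ≤ Fintype.card V) (x y : V) (hxy : x ≠ y)
    (hna : ¬ G.Adj x y)
    (hc : ∀ a b, a ≠ x → a ≠ y → b ≠ x → b ≠ y → a ≠ b → G.Adj a b)
    (hd : ∀ a, a ≠ x → a ≠ y → G.Adj a x ∨ G.Adj a y) :
    G.degree x + G.degree y =
      (univ.filter fun v : V => G.degree v = Fintype.card V - 1).card + Fintype.card V - 2 ∧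
    ∀ v : V, v ≠ x → v ≠ y →
      (G.degree v = Fintype.card V - 1 ∨ G.degree v = Fintype.card V - 2) := by
  constructor
  · have hfx : ¬ G.degree x = Fintype.card V - 1 := by
      rw [full_iff]
      intro h
      exact hna (h y hxy.symm)
    have hfy : ¬ G.degree y = Fintype.card V - 1 := by
      rw [full_iff]
      intro h
      exact hna (h x hxy).symm
    rw [deg_sum x y hxy, p_sum (G := G) x y hxy (fun v : V => G.degree v = Fintype.card V - 1),
      if_neg hna, if_neg hfx, if_neg hfy]
    have hone : ∑ v ∈ (univ.erase x).erase y,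
        (1 + if G.degree v = Fintype.card V - 1 then 1 else 0) =
        Fintype.card V - 2 + ∑ v ∈ (univ.erase x).erase y,
          (if G.degree v = Fintype.card V - 1 then 1 else 0) := by
      rw [Finset.sum_add_distrib]
      simp [card_others x y hxy]
    have heq : ∑ v ∈ (univ.erase x).erase y,
        ((if G.Adj x v then 1 else 0) + (if G.Adj y v then 1 else 0)) =
      ∑ v ∈ (univ.erase x).erase y,
        (1 + if G.degree v = Fintype.card V - 1 then 1 else 0) := by
      apply Finset.sum_congr rfl
      intro v hv
      simp only [Finset.mem_erase, Finset.mem_univ, and_true] at hv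
      have hf : G.degree v = Fintype.card V - 1 ↔ G.Adj x v ∧ G.Adj y v := by
        rw [full_iff]
        constructor
        · intro h
          exact ⟨(h x (Ne.symm hv.2)).symm, (h y (Ne.symm hv.1)).symm⟩
        · rintro ⟨h1, h2⟩ w hw
          by_cases hwx : w = x
          · rw [hwx]; exact h1.symm
          by_cases hwy : w = y
          · rw [hwy]; exact h2.symm
          exact hc v w hv.2 hv.1 hwx hwy (Ne.symm hw)
      have h1 := hd v hv.2 hv.1
      rw [G.adj_comm v x, G.adj_comm v y] at h1
      by_cases hx : G.Adj x v <;> by_cases hy : G.Adj y v <;> simp [hx, hy, hf] <;> tauto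
    omega
  · intro v hvx hvy
    have h1 : Fintype.card V - 2 ≤ G.degree v := by
      rw [conearly]
      have h1 := hd v hvx hvy
      have k : ∀ a, a ≠ v → ¬ G.Adj v a → a = x ∨ a = y := by
        intro a hav hna
        by_contra h
        push Not at h
        exact hna (hc v a hvx hvy h.1 h.2 hav.symm)
      intro a b ha hb ha' hb'
      rcases k a ha ha' with rfl | rfl <;> rcases k b hb hb' with rfl | rfl <;> tauto
    have := G.degree_lt_card_verts v
    omega

lemma equi_K (h : Equimatchable G) {K : Finset V}
    (hK : ∀ a ∈ K, ∀ b ∈ K, a ≠ b → G.Adj a b) (hI : ∀ a b, a ∉ K → b ∉ K → ¬ G.Adj a b)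
    {M M' : Finset (Sym2 V)} {S S' : Finset V} (c : Cov G M S) (c' : Cov G M' S')
    (he : Even (S ∪ K).card) (he' : Even (S' ∪ K).card) : (S ∪ K).card = (S' ∪ K).card := by
  have key : ∀ M S, Cov G M S → Even (S ∪ K).card → ∃ M', Cov G M' (S ∪ K) := by
    intro M S c he
    have h1 : (S ∪ K).card = S.card + (K \ S).card := by
      rw [← Finset.card_union_of_disjoint Finset.disjoint_sdiff, Finset.union_sdiff_self_eq_union]
    have h2 := cov_card c
    obtain ⟨m, hm⟩ := he
    obtain ⟨M', hM'⟩ := cov_clique (m - M.card) (T := K \ S) c Finset.disjoint_sdiff (by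
      intro a ha b hb hab
      simp at ha hb
      exact hK a ha.1 b hb.1 hab) (by omega)
    rw [Finset.union_sdiff_self_eq_union] at hM'
    exact ⟨M', hM'⟩
  obtain ⟨_, d⟩ := key M S c he
  obtain ⟨_, d'⟩ := key M' S' c' he'
  refine equi_cov h d d' ?_ ?_ <;>
  · intro a b ha hb
    simp at ha hb
    exact hI a b ha.2 hb.2

lemma no_two (h : Equimatchable G) {K : Finset V}
    (hK : ∀ a ∈ K, ∀ b ∈ K, a ≠ b → G.Adj a b) (hI : ∀ a b, a ∉ K → b ∉ K → ¬ G.Adj a b)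
    (he : Even K.card) {u u' v v' : V} (hu : u ∉ K) (hu' : u' ∉ K) (hv : v ∈ K) (hv' : v' ∈ K)
    (huu : u ≠ u') (hvv : v ≠ v') (h1 : G.Adj u v) (h2 : G.Adj u' v') : False := by
  have c1 := cov_insert (cov_empty (G := G)) (u := u) (v := v) (by simp) (by simp) h1
  have c2 := cov_insert c1 (u := u') (v := v') (by simp; grind) (by simp; grind) h2
  have hS : (insert u' (insert v' (insert u (insert v ∅)))) ∪ K = insert u' (insert u K) := by
    ext w; simp; grind
  have hcard : (insert u' (insert u K)).card = K.card + 2 := by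
    rw [Finset.card_insert_of_notMem (by simp; grind), Finset.card_insert_of_notMem hu]
  have := equi_K h hK hI cov_empty c2 (by simpa using he) (by
    rw [hS, hcard]; exact he.add (by simp))
  rw [hS, hcard] at this
  simp at this

lemma all_nbr (h : Equimatchable G) {K : Finset V}
    (hK : ∀ a ∈ K, ∀ b ∈ K, a ≠ b → G.Adj a b) (hI : ∀ a b, a ∉ K → b ∉ K → ¬ G.Adj a b)
    (ho : Odd K.card) {u v : V} (hu : u ∉ K) (hv : v ∈ K) (h1 : G.Adj u v)
    {w : V} (hw : w ∈ K) : ∃ z, z ∉ K ∧ G.Adj z w := by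
  by_contra hcon
  push Not at hcon
  obtain ⟨m, hm⟩ := ho
  have c1 := cov_insert (cov_empty (G := G)) (u := u) (v := v) (by simp) (by simp) h1
  obtain ⟨M1, d1⟩ := cov_clique m (T := K.erase v) c1 (by
      rw [Finset.disjoint_left]; simp; grind) (by
      intro a ha b hb hab
      simp at ha hb
      exact hK a ha.1 b hb.1 hab) (by rw [Finset.card_erase_of_mem hv]; omega)
  obtain ⟨M2, d2⟩ := cov_clique m (T := K.erase w) (cov_empty (G := G)) (by simp) (by
      intro a ha b hb hab
      simp at ha hb
      exact hK a ha.1 b hb.1 hab) (by rw [Finset.card_erase_of_mem hw]; omega)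
  have hS1 : (insert u (insert v ∅)) ∪ K.erase v = insert u K := by
    ext w; simp; grind
  have := equi_cov h d1 d2 (by
    rw [hS1]
    intro a b ha hb
    simp at ha hb
    exact hI a b ha.2 hb.2) (by
    intro a b ha hb hab
    simp at ha hb
    by_cases haK : a ∈ K <;> by_cases hbK : b ∈ K
    · have := hab.ne; grind
    · have : a = w := by grind
      exact hcon b hbK (this ▸ hab.symm)
    · have : b = w := by grind
      exact hcon a haK (this ▸ hab)
    · exact hI a b haK hbK hab)
  rw [hS1, Finset.card_insert_of_notMem hu, Finset.empty_union, Finset.card_erase_of_mem hw] at this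
  omega

lemma no_three (h : Equimatchable G) {K : Finset V}
    (hK : ∀ a ∈ K, ∀ b ∈ K, a ≠ b → G.Adj a b) (hI : ∀ a b, a ∉ K → b ∉ K → ¬ G.Adj a b)
    (ho : Odd K.card) {u u' u'' v v' v'' : V} (hu : u ∉ K) (hu' : u' ∉ K) (hu'' : u'' ∉ K)
    (hv : v ∈ K) (hv' : v' ∈ K) (hv'' : v'' ∈ K)
    (d1 : u ≠ u') (d2 : u ≠ u'') (d3 : u' ≠ u'') (e1 : v ≠ v') (e2 : v ≠ v'') (e3 : v' ≠ v'')
    (h1 : G.Adj u v) (h2 : G.Adj u' v') (h3 : G.Adj u'' v'') : False := by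
  have c1 := cov_insert (cov_empty (G := G)) (u := u) (v := v) (by simp) (by simp) h1
  have c2 := cov_insert c1 (u := u') (v := v') (by simp; grind) (by simp; grind) h2
  have c3 := cov_insert c2 (u := u'') (v := v'') (by simp; grind) (by simp; grind) h3
  have hS1 : (insert u (insert v ∅)) ∪ K = insert u K := by
    ext w; simp; grind
  have hS : (insert u'' (insert v'' (insert u' (insert v' (insert u (insert v ∅)))))) ∪ K =
      insert u'' (insert u' (insert u K)) := by
    ext w; simp; grind
  have hcard1 : (insert u K).card = K.card + 1 := Finset.card_insert_of_notMem hu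
  have hcard : (insert u'' (insert u' (insert u K))).card = K.card + 3 := by
    rw [Finset.card_insert_of_notMem (by simp; grind),
      Finset.card_insert_of_notMem (by simp; grind), hcard1]
  obtain ⟨m, hm⟩ := ho
  have := equi_K h hK hI c1 c3 (by
    rw [hS1, hcard1]; exact ⟨m + 1, by omega⟩) (by
    rw [hS, hcard]; exact ⟨m + 2, by omega⟩)
  rw [hS, hcard, hS1, hcard1] at this
  omega

/-- structure of case (ii)/(iii) -/
lemma fwd23 [DecidableRel G.Adj] {K : Finset V}
    (hK : ∀ a ∈ K, ∀ b ∈ K, a ≠ b → G.Adj a b)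
    {x : V} (hx : x ∈ K) (hL : ∀ u, u ∉ K → ∀ w, G.Adj u w ↔ w = x)
    (he : Even K.card) (h2 : K.card + 2 ≤ Fintype.card V) (r p : ℕ)
    (hr : r = (univ.filter fun v : V => G.degree v = 1).card)
    (hp : p = (univ.filter fun v : V => G.degree v = Fintype.card V - 1).card) :
    (r = Fintype.card V - 1 ∧ p = 1) ∨
      (p = 1 ∧ 2 ≤ r ∧ Even (Fintype.card V - r) ∧
        ∀ v : V, G.degree v = 1 ∨ G.degree v = Fintype.card V - r - 1 ∨
          G.degree v = Fintype.card V - 1) := by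
  have hK0 : 0 < K.card := Finset.card_pos.2 ⟨x, hx⟩
  have dI : ∀ u, u ∉ K → G.degree u = 1 := by
    intro u hu
    rw [deg_eq {x} (by simpa using hL u hu)]
    simp
  have dx : G.degree x = Fintype.card V - 1 := by
    rw [full_iff]
    intro w hw
    by_cases hwK : w ∈ K
    · exact hK x hx w hwK hw.symm
    · exact ((hL w hwK x).2 rfl).symm
  have dK : ∀ v ∈ K, v ≠ x → G.degree v = K.card - 1 := by
    intro v hv hvx
    rw [deg_eq (K.erase v), Finset.card_erase_of_mem hv]
    intro w
    rw [Finset.mem_erase]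
    constructor
    · intro h
      refine ⟨h.ne', ?_⟩
      by_contra hw
      exact hvx ((hL w hw v).1 h.symm)
    · rintro ⟨h1, h2⟩
      exact hK v hv w h2 h1.symm
  obtain ⟨m, hm⟩ := he
  have hp1 : p = 1 := by
    rw [hp, Finset.card_eq_one]
    refine ⟨x, ?_⟩
    ext v
    simp only [Finset.mem_filter, Finset.mem_univ, true_and, Finset.mem_singleton]
    constructor
    · intro h
      by_contra hvx
      by_cases hv : v ∈ K
      · have := dK v hv hvx; omega
      · have := dI v hv; omega
    · rintro rfl; exact dx
  by_cases hk : K.card = 2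
  · left
    refine ⟨?_, hp1⟩
    have : (univ.filter fun v : V => G.degree v = 1) = univ.erase x := by
      ext v
      simp only [Finset.mem_filter, Finset.mem_univ, true_and, Finset.mem_erase, and_true]
      constructor
      · rintro h rfl
        omega
      · intro hvx
        by_cases hv : v ∈ K
        · have := dK v hv hvx; omega
        · exact dI v hv
    rw [hr, this, Finset.card_erase_of_mem (by simp), Finset.card_univ]
  · right
    have : (univ.filter fun v : V => G.degree v = 1) = Kᶜ := by
      ext v
      simp only [Finset.mem_filter, Finset.mem_univ, true_and, Finset.mem_compl]
      constructor
      · rintro h hv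
        by_cases hvx : v = x
        · subst hvx; omega
        · have := dK v hv hvx; omega
      · exact dI v
    rw [this, Finset.card_compl] at hr
    refine ⟨hp1, by omega, ⟨m, by omega⟩, ?_⟩
    intro v
    by_cases hv : v ∈ K
    · by_cases hvx : v = x
      · subst hvx; exact Or.inr (Or.inr dx)
      · have := dK v hv hvx; omega
    · exact Or.inl (dI v hv)

lemma fwd4 [DecidableRel G.Adj] {K : Finset V}
    (hK : ∀ a ∈ K, ∀ b ∈ K, a ≠ b → G.Adj a b)
    {x y : V} (hx : x ∈ K) (hy : y ∉ K) (hna : ¬ G.Adj x y)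
    (hL : ∀ u, u ∉ K → u ≠ y → ∀ w, G.Adj u w ↔ w = x)
    (hyK : ∀ w, G.Adj y w ↔ w ∈ K ∧ w ≠ x)
    (ho : Odd K.card) (h3 : 3 ≤ K.card) (h2 : K.card + 3 ≤ Fintype.card V) (r p : ℕ)
    (hr : r = (univ.filter fun v : V => G.degree v = 1).card)
    (hp : p = (univ.filter fun v : V => G.degree v = Fintype.card V - 1).card) :
    (p = 0 ∧ 2 ≤ r ∧ Even (Fintype.card V - r) ∧
        ∃ x y : V, x ≠ y ∧ ¬ G.Adj x y ∧
          G.degree x = Fintype.card V - 2 ∧ G.degree y = Fintype.card V - r - 2 ∧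
          ∀ v : V, v ≠ x → v ≠ y → (G.degree v = 1 ∨ G.degree v = Fintype.card V - r - 1)) := by
  have hxy : x ≠ y := by rintro rfl; exact hy hx
  have dI : ∀ u, u ∉ K → u ≠ y → G.degree u = 1 := by
    intro u hu huy
    rw [deg_eq {x} (by simpa using hL u hu huy)]
    simp
  have dx : G.degree x = Fintype.card V - 2 := by
    rw [deg_eq ((univ.erase x).erase y), card_others x y hxy]
    intro w
    simp only [Finset.mem_erase, Finset.mem_univ, and_true]
    constructor
    · intro h
      refine ⟨?_, h.ne'⟩
      rintro rfl
      exact hna h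
    · rintro ⟨h1, h2⟩
      by_cases hwK : w ∈ K
      · exact hK x hx w hwK h2.symm
      · exact ((hL w hwK h1 x).2 rfl).symm
  have dy : G.degree y = K.card - 1 := by
    rw [deg_eq (K.erase x), Finset.card_erase_of_mem hx]
    intro w
    rw [hyK, Finset.mem_erase, and_comm]
  have dK : ∀ v ∈ K, v ≠ x → G.degree v = K.card := by
    intro v hv hvx
    rw [deg_eq (insert y (K.erase v)), Finset.card_insert_of_notMem (by simp [hy]),
      Finset.card_erase_of_mem hv]
    · omega
    intro w
    rw [Finset.mem_insert, Finset.mem_erase]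
    constructor
    · intro h
      by_cases hwy : w = y
      · exact Or.inl hwy
      refine Or.inr ⟨h.ne', ?_⟩
      by_contra hw
      exact hvx ((hL w hw hwy v).1 h.symm)
    · rintro (rfl | ⟨h1, h2⟩)
      · exact ((hyK v).2 ⟨hv, hvx⟩).symm
      · exact hK v hv w h2 h1.symm
  have hr' : (univ.filter fun v : V => G.degree v = 1) = Kᶜ.erase y := by
    ext v
    simp only [Finset.mem_filter, Finset.mem_univ, true_and, Finset.mem_compl, Finset.mem_erase]
    constructor
    · intro h
      refine ⟨?_, ?_⟩
      · rintro rfl; omega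
      · intro hv
        by_cases hvx : v = x
        · subst hvx; omega
        · have := dK v hv hvx; omega
    · rintro ⟨h1, h2⟩
      exact dI v h2 h1
  rw [hr', Finset.card_erase_of_mem (by simpa using hy), Finset.card_compl] at hr
  obtain ⟨m, hm⟩ := ho
  refine ⟨?_, by omega, ⟨m + 1, by omega⟩, x, y, hxy, hna, dx, by omega, ?_⟩
  · rw [hp, Finset.card_eq_zero, Finset.filter_eq_empty_iff]
    intro v _ h
    by_cases hvx : v = x
    · subst hvx; omega
    by_cases hvy : v = y
    · subst hvy; omega
    by_cases hv : v ∈ K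
    · have := dK v hv hvx; omega
    · have := dI v hv hvy; omega
  · intro v hvx hvy
    by_cases hv : v ∈ K
    · have := dK v hv hvx; omega
    · exact Or.inl (dI v hv hvy)

end fwd

section fwdmain
set_option linter.unusedSectionVars false
variable {V : Type*} [Fintype V] [DecidableEq V] {G : SimpleGraph V}

/-- the odd case when there is a third independent vertex adjacent to `a` -/
lemma odd_struct (h : Equimatchable G) {K : Finset V}
    (hK : ∀ a ∈ K, ∀ b ∈ K, a ≠ b → G.Adj a b) (hI : ∀ a b, a ∉ K → b ∉ K → ¬ G.Adj a b)
    (hmax : ∀ u, u ∉ K → ∃ w ∈ K, ¬ G.Adj u w)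
    (hNoIso : ∀ v : V, ∃ w : V, G.Adj v w)
    (ho : Odd K.card) (h3 : 3 ≤ K.card) {y1 y z a : V} (hy1 : y1 ∉ K) (hy : y ∉ K) (hz : z ∉ K)
    (hne : y1 ≠ y) (hz1 : z ≠ y1) (hzy : z ≠ y)
    (hcov : ∀ w ∈ K, G.Adj y1 w ∨ G.Adj y w) (ha : a ∈ K) (haz : G.Adj z a) (hay : G.Adj y1 a) :
    ¬ G.Adj a y ∧ (∀ u, u ∉ K → u ≠ y → ∀ w, G.Adj u w ↔ w = a) ∧
      (∀ w, G.Adj y w ↔ w ∈ K ∧ w ≠ a) := by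
  have hIK : ∀ u w, u ∉ K → G.Adj u w → w ∈ K := by
    intro u w hu huw
    by_contra hw
    exact hI u w hu hw huw
  have hyb : ∀ b ∈ K, b ≠ a → G.Adj y b := by
    intro b hb hba
    by_contra hnb
    have hb1 : G.Adj y1 b := (hcov b hb).resolve_right hnb
    by_cases hc : ∃ c, c ≠ a ∧ G.Adj y c
    · obtain ⟨c, hca, hyc⟩ := hc
      have hcb : c ≠ b := by rintro rfl; exact hnb hyc
      exact no_three h hK hI ho hz hy1 hy ha hb (hIK y c hy hyc) hz1 hzy hne hba.symm hca.symm
        hcb.symm haz hb1 hyc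
    · push Not at hc
      obtain ⟨w, hw, hnw⟩ := hmax y1 hy1
      by_cases hwa : w = a
      · exact hnw (hwa ▸ hay)
      · exact hc w hwa ((hcov w hw).resolve_left hnw)
  have hnya : ¬ G.Adj y a := by
    intro hya
    obtain ⟨w, hw, hnw⟩ := hmax y hy
    by_cases hwa : w = a
    · exact hnw (hwa ▸ hya)
    · exact hnw (hyb w hw hwa)
  have honly : ∀ u, u ∉ K → u ≠ y → ∀ w, G.Adj u w → w = a := by
    intro u hu huy b hub
    by_contra hba
    have hb := hIK u b hu hub
    obtain ⟨t, htK, htu, hty, hta⟩ : ∃ t, t ∉ K ∧ t ≠ u ∧ t ≠ y ∧ G.Adj t a := by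
      by_cases hzu : z = u
      · exact ⟨y1, hy1, fun h => hz1 (hzu.trans h.symm), hne, hay⟩
      · exact ⟨z, hz, hzu, hzy, haz⟩
    obtain ⟨c, hc⟩ : ((K.erase a).erase b).Nonempty := by
      rw [← Finset.card_pos, Finset.card_erase_of_mem (by simp [hb, hba]),
        Finset.card_erase_of_mem ha]
      omega
    simp only [Finset.mem_erase] at hc
    exact no_three h hK hI ho htK hu hy ha hb hc.2.2 htu hty huy (Ne.symm hba)
      (Ne.symm hc.2.1) (Ne.symm hc.1) hta hub (hyb c hc.2.2 hc.2.1)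
  refine ⟨fun h => hnya h.symm, ?_, ?_⟩
  · intro u hu huy w
    refine ⟨honly u hu huy w, ?_⟩
    rintro rfl
    obtain ⟨v, hv⟩ := hNoIso u
    rwa [← honly u hu huy v hv]
  · intro w
    constructor
    · intro hw
      refine ⟨hIK y w hy hw, ?_⟩
      rintro rfl
      exact hnya hw
    · rintro ⟨h1, h2⟩
      exact hyb w h1 h2

lemma fwd [DecidableRel G.Adj] (hn4 : 4 ≤ Fintype.card V)
    (hNoIso : ∀ v : V, ∃ w : V, G.Adj v w)
    (r p : ℕ)
    (hr : r = (Finset.univ.filter fun v : V => G.degree v = 1).card)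
    (hp : p = (Finset.univ.filter fun v : V => G.degree v = Fintype.card V - 1).card)
    (h : Equimatchable G) (hs : IsSplitGraph G) :
      p = Fintype.card V ∨
      (r = Fintype.card V - 1 ∧ p = 1) ∨
      (p = 1 ∧ 2 ≤ r ∧ Even (Fintype.card V - r) ∧
        ∀ v : V, G.degree v = 1 ∨ G.degree v = Fintype.card V - r - 1 ∨
          G.degree v = Fintype.card V - 1) ∨
      (p = 0 ∧ 2 ≤ r ∧ Even (Fintype.card V - r) ∧
        ∃ x y : V, x ≠ y ∧ ¬ G.Adj x y ∧
          G.degree x = Fintype.card V - 2 ∧ G.degree y = Fintype.card V - r - 2 ∧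
          ∀ v : V, v ≠ x → v ≠ y → (G.degree v = 1 ∨ G.degree v = Fintype.card V - r - 1)) ∨
      (Odd (Fintype.card V) ∧ ∃ x y : V, x ≠ y ∧
        G.degree x + G.degree y = p + Fintype.card V - 2 ∧
        ∀ v : V, v ≠ x → v ≠ y →
          (G.degree v = Fintype.card V - 1 ∨ G.degree v = Fintype.card V - 2)) := by
  obtain ⟨K, hK, hI, hmax⟩ := split_max hs
  have hIK : ∀ u w, u ∉ K → G.Adj u w → w ∈ K := by
    intro u w hu huw
    by_contra hw
    exact hI u w hu hw huw
  by_cases hall : ∀ v, v ∈ K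
  · left
    rw [hp, Finset.filter_true_of_mem, Finset.card_univ]
    intro v _
    rw [full_iff]
    intro w hw
    exact hK v (hall v) w (hall w) hw.symm
  push Not at hall
  obtain ⟨u0, hu0⟩ := hall
  obtain ⟨v0, huv⟩ := hNoIso u0
  have hv0 := hIK u0 v0 hu0 huv
  obtain ⟨w0, hw0, hnw⟩ := hmax u0 hu0
  have hvw : v0 ≠ w0 := by rintro rfl; exact hnw huv
  have hcard := K.card_add_card_compl
  rcases Nat.even_or_odd K.card with he | ho
  · by_cases hone : ∀ u, u ∉ K → u = u0
    · have hKc : Kᶜ = {u0} := by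
        ext u
        simp only [Finset.mem_compl, Finset.mem_singleton]
        exact ⟨hone u, fun h => h ▸ hu0⟩
      rw [hKc, Finset.card_singleton] at hcard
      have hin : ∀ a, a ≠ u0 → a ∈ K := by
        intro a ha
        by_contra h
        exact ha (hone a h)
      have hwu : w0 ≠ u0 := by rintro rfl; exact hu0 hw0
      have := fwd5 hn4 w0 u0 hwu (fun h => hnw h.symm)
        (fun a b _ ha _ hb hab => hK a (hin a ha) b (hin b hb) hab)
        (fun a ha ha' => Or.inl (hK a (hin a ha') w0 hw0 ha))
      rw [← hp] at this
      refine Or.inr (Or.inr (Or.inr (Or.inr ⟨?_, w0, u0, hwu, this⟩)))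
      rw [← hcard]
      exact he.add_one
    · push Not at hone
      obtain ⟨u1, hu1, hu10⟩ := hone
      have h1 : ∀ u, u ∉ K → u ≠ u0 → ∀ w, G.Adj u w → w = v0 := by
        intro u hu huu w huw
        by_contra hw
        exact no_two h hK hI he hu hu0 (hIK u w hu huw) hv0 huu hw huw huv
      have h1a : G.Adj u1 v0 := by
        obtain ⟨w, hw⟩ := hNoIso u1
        rwa [← h1 u1 hu1 hu10 w hw]
      have h2 : ∀ u, u ∉ K → ∀ w, G.Adj u w → w = v0 := by
        intro u hu w huw
        by_cases huu : u = u0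
        · by_contra hw
          refine no_two h hK hI he hu hu1 (hIK u w hu huw) hv0 ?_ hw huw h1a
          rw [huu]; exact hu10.symm
        · exact h1 u hu huu w huw
      have hL : ∀ u, u ∉ K → ∀ w, G.Adj u w ↔ w = v0 := by
        intro u hu w
        refine ⟨h2 u hu w, ?_⟩
        rintro rfl
        obtain ⟨v, hv⟩ := hNoIso u
        rwa [← h2 u hu v hv]
      have h2c : 1 < Kᶜ.card :=
        Finset.one_lt_card.2 ⟨u1, by simpa using hu1, u0, by simpa using hu0, hu10⟩
      have := fwd23 hK hv0 hL he (by omega) r p hr hp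
      tauto
  · have h3 : 3 ≤ K.card := by
      have : 1 < K.card := Finset.one_lt_card.2 ⟨v0, hv0, w0, hw0, hvw⟩
      obtain ⟨m, hm⟩ := ho
      omega
    obtain ⟨y2, hy2, hy2w⟩ := all_nbr h hK hI ho hu0 hv0 huv hw0
    have hyy : u0 ≠ y2 := by rintro rfl; exact hnw hy2w
    have hcov : ∀ w ∈ K, G.Adj u0 w ∨ G.Adj y2 w := by
      intro w hw
      by_contra hcon
      push Not at hcon
      obtain ⟨z, hz, hzw⟩ := all_nbr h hK hI ho hu0 hv0 huv hw
      refine no_three h hK hI ho hu0 hy2 hz hv0 hw0 hw hyy ?_ ?_ hvw ?_ ?_ huv hy2w hzw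
      · rintro rfl; exact hcon.1 hzw
      · rintro rfl; exact hcon.2 hzw
      · rintro rfl; exact hcon.1 huv
      · rintro rfl; exact hcon.2 hy2w
    by_cases htwo : ∀ z, z ∉ K → z = u0 ∨ z = y2
    · have hKc : Kᶜ = {u0, y2} := by
        ext u
        simp only [Finset.mem_compl, Finset.mem_singleton, Finset.mem_insert]
        refine ⟨htwo u, ?_⟩
        rintro (rfl | rfl) <;> assumption
      rw [hKc, Finset.card_pair hyy] at hcard
      have hin : ∀ a, a ≠ u0 → a ≠ y2 → a ∈ K := by
        intro a ha hb
        by_contra h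
        rcases htwo a h with h | h <;> contradiction
      have := fwd5 hn4 u0 y2 hyy (hI _ _ hu0 hy2)
        (fun a b ha ha' hb hb' hab => hK a (hin a ha ha') b (hin b hb hb') hab)
        (fun a ha ha' => (hcov a (hin a ha ha')).imp (fun h => h.symm) (fun h => h.symm))
      rw [← hp] at this
      refine Or.inr (Or.inr (Or.inr (Or.inr ⟨?_, u0, y2, hyy, this⟩)))
      rw [← hcard]
      exact ho.add_even (by simp)
    · push Not at htwo
      obtain ⟨z, hz, hz0, hz2⟩ := htwo
      obtain ⟨a, hza⟩ := hNoIso z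
      have ha := hIK z a hz hza
      have h3c : 2 < Kᶜ.card :=
        Finset.two_lt_card.2 ⟨z, by simpa using hz, u0, by simpa using hu0, y2, by simpa using hy2,
          hz0, hz2, hyy⟩
      refine Or.inr (Or.inr (Or.inr (Or.inl ?_)))
      rcases hcov a ha with hay | hay
      · obtain ⟨k1, k2, k3⟩ := odd_struct h hK hI hmax hNoIso ho h3 hu0 hy2 hz hyy hz0 hz2 hcov
          ha hza hay
        exact fwd4 hK ha hy2 k1 k2 k3 ho h3 (by omega) r p hr hp
      · obtain ⟨k1, k2, k3⟩ := odd_struct h hK hI hmax hNoIso ho h3 hy2 hu0 hz hyy.symm hz2 hz0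
          (fun w hw => (hcov w hw).symm) ha hza hay
        exact fwd4 hK ha hu0 k1 k2 k3 ho h3 (by omega) r p hr hp

end fwdmain

theorem stmt_8 {V : Type*} [Fintype V] [DecidableEq V]
    (G : SimpleGraph V) [DecidableRel G.Adj]
    (n : ℕ) (hn : Fintype.card V = n) (hn4 : 4 ≤ n)
    (hNoIso : ∀ v : V, ∃ w : V, G.Adj v w)
    (r p : ℕ)
    (hr : r = (Finset.univ.filter fun v : V => G.degree v = 1).card)
    (hp : p = (Finset.univ.filter fun v : V => G.degree v = n - 1).card)
 :
    (Equimatchable G ∧ IsSplitGraph G) ↔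
      p = n ∨
      (r = n - 1 ∧ p = 1) ∨
      (p = 1 ∧ 2 ≤ r ∧ Even (n - r) ∧
        ∀ v : V, G.degree v = 1 ∨ G.degree v = n - r - 1 ∨ G.degree v = n - 1) ∨
      (p = 0 ∧ 2 ≤ r ∧ Even (n - r) ∧
        ∃ x y : V, x ≠ y ∧ ¬ G.Adj x y ∧
          G.degree x = n - 2 ∧ G.degree y = n - r - 2 ∧
          ∀ v : V, v ≠ x → v ≠ y → (G.degree v = 1 ∨ G.degree v = n - r - 1)) ∨
      (Odd n ∧ ∃ x y : V, x ≠ y ∧ G.degree x + G.degree y = p + n - 2 ∧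
        ∀ v : V, v ≠ x → v ≠ y → (G.degree v = n - 1 ∨ G.degree v = n - 2)) := by
  subst hn
  constructor
  · rintro ⟨h, hs⟩
    exact fwd hn4 hNoIso r p hr hp h hs
  · rintro (h | ⟨h1, h2⟩ | ⟨h1, h2, h3, h4⟩ | ⟨_, h2, h3, x, y, h4, h5, h6, h7, h8⟩ |
      ⟨h1, x, y, h2, h3, h4⟩)
    · exact back1 (hp.symm.trans h)
    · exact back2 hn4 (hr.symm.trans h1) (hp.symm.trans h2)
    · exact back3 hn4 r hr (hp.symm.trans h1) h2 h3 h4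
    · exact back4 hn4 r hr h2 h3 x y h4 h5 h6 h7 h8
    · exact back5 hn4 p hp h1 x y h2 h3 h4
end

section
/- Let G be a finite simple undirected graph on n ≥ 4 vertices with no isolated vertices, let r be the number of vertices of G of degree 1 and p the number of vertices of degree n − 1. If p = 1, r ≥ 2, n − r is even, and every vertex of G has degree 1, n − r − 1, or n − 1, then G is an equimatchable split graph; moreover, every maximal matching of G has exactly (n − r)/2 edges. -/
open Finset

variable {V : Type*}

theorem stmt_12 {V : Type*} [Fintype V] [DecidableEq V]
    (G : SimpleGraph V) [DecidableRel G.Adj]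
    (n : ℕ) (hn : Fintype.card V = n) (hn4 : 4 ≤ n)
    (hNoIso : ∀ v : V, ∃ w : V, G.Adj v w)
    (r p : ℕ)
    (hr : r = (Finset.univ.filter fun v : V => G.degree v = 1).card)
    (hp : p = (Finset.univ.filter fun v : V => G.degree v = n - 1).card)
    (hp1 : p = 1) (hr2 : 2 ≤ r) (heven : Even (n - r))
    (hdeg : ∀ v : V, G.degree v = 1 ∨ G.degree v = n - r - 1 ∨ G.degree v = n - 1) :
    (Equimatchable G ∧ IsSplitGraph G) ∧
      ∀ M : Finset (Sym2 V), IsMaximalMatching G M → M.card = (n - r) / 2 := by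
  subst hn
  have huniv : ∀ v : V, G.degree v = Fintype.card V - 1 → ∀ w, w ≠ v → G.Adj v w := by
    intro v hv w hw
    have h1 : G.neighborFinset v = Finset.univ.erase v := by
      apply Finset.eq_of_subset_of_card_le
      · intro x hx
        rw [SimpleGraph.mem_neighborFinset] at hx
        simp [hx.ne']
      · rw [Finset.card_erase_of_mem (Finset.mem_univ _), SimpleGraph.card_neighborFinset_eq_degree,
          hv, Finset.card_univ]
    rw [← SimpleGraph.mem_neighborFinset, h1]
    simp [hw]
  obtain ⟨u, hu⟩ := Finset.card_eq_one.mp (hp.symm.trans hp1)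
  have hu' : ∀ v, G.degree v = Fintype.card V - 1 ↔ v = u := by
    intro v
    have := Finset.ext_iff.mp hu v
    simpa using this
  have hud := (hu' u).2 rfl
  have hua := huniv u hud
  have hleaf : ∀ l, G.degree l = 1 → ∀ w, G.Adj l w → w = u := by
    intro l hl w hw
    have hne : l ≠ u := by rintro rfl; omega
    have h1 : G.Adj l u := (hua l hne).symm
    rw [← SimpleGraph.card_neighborFinset_eq_degree, Finset.card_eq_one] at hl
    obtain ⟨a, ha⟩ := hl
    have h2 : w ∈ G.neighborFinset l := by simpa using hw
    have h3 : u ∈ G.neighborFinset l := by simpa using h1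
    rw [ha, Finset.mem_singleton] at h2 h3
    rw [h2, h3]
  set K : Finset V := Finset.univ.filter fun v : V => ¬ G.degree v = 1 with hK
  have hKc : K.card = Fintype.card V - r := by
    have := Finset.card_filter_add_card_filter_not (s := (Finset.univ : Finset V))
      (fun v : V => G.degree v = 1)
    rw [Finset.card_univ, ← hr] at this
    have h2 : r + K.card = Fintype.card V := by
      rw [← this, hK]
    omega
  have hmK : ∀ v, v ∈ K ↔ G.degree v ≠ 1 := by intro v; simp [hK]
  have huK : u ∈ K := by rw [hmK]; omega
  have hclique : ∀ v ∈ K, ∀ w ∈ K, v ≠ w → G.Adj v w := by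
    intro v hv w hw hvw
    by_cases hvu : v = u
    · subst hvu; exact hua w hvw.symm
    have hd : G.degree v = Fintype.card V - r - 1 := by
      rcases hdeg v with h | h | h
      · exact absurd h ((hmK v).1 hv)
      · exact h
      · exact absurd ((hu' v).1 h) hvu
    have h1 : G.neighborFinset v = K.erase v := by
      apply Finset.eq_of_subset_of_card_le
      · intro x hx
        rw [SimpleGraph.mem_neighborFinset] at hx
        rw [Finset.mem_erase, hmK]
        refine ⟨hx.ne', fun h => hvu (hleaf x h v hx.symm)⟩
      · rw [Finset.card_erase_of_mem hv, SimpleGraph.card_neighborFinset_eq_degree, hd, hKc]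
    rw [← SimpleGraph.mem_neighborFinset, h1]
    simp [hw, hvw.symm]
  have hmain : ∀ M : Finset (Sym2 V), IsMaximalMatching G M →
      M.card = (Fintype.card V - r) / 2 := by
    rintro M ⟨⟨hMG, hMd⟩, hmax⟩
    set f : Sym2 V → Finset V := fun e => K.filter (· ∈ e) with hf
    have hB : (M.biUnion f).card = ∑ e ∈ M, (f e).card := by
      apply Finset.card_biUnion
      intro e he e' he' hne
      refine Finset.disjoint_left.2 ?_
      intro x hx hx'
      simp only [hf, Finset.mem_filter] at hx hx'
      exact hMd e he e' he' hne x hx.2 hx'.2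
    have hup : ∑ e ∈ M, (f e).card ≤ M.card * 2 := by
      rw [← smul_eq_mul]
      apply Finset.sum_le_card_nsmul
      intro e he
      induction e using Sym2.ind with
      | _ a b =>
        refine le_trans (Finset.card_le_card (t := {a, b}) ?_) Finset.card_le_two
        intro x hx
        simpa [hf] using (Finset.mem_filter.1 hx).2
    have hlow : M.card * 2 ≤ ∑ e ∈ M, ((f e).card + if u ∈ e then 1 else 0) := by
      rw [← smul_eq_mul]
      apply Finset.card_nsmul_le_sum
      intro e he
      have heG : e ∈ G.edgeSet := hMG he
      by_cases hue : u ∈ e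
      · have : 0 < (f e).card := Finset.card_pos.2 ⟨u, by simp [hf, huK, hue]⟩
        simp only [hue, if_true]
        omega
      · induction e using Sym2.ind with
        | _ a b =>
          rw [SimpleGraph.mem_edgeSet] at heG
          simp only [Sym2.mem_iff, not_or] at hue
          have ha : a ∈ K := by
            rw [hmK]; intro h; exact hue.2 (hleaf a h b heG).symm
          have hb : b ∈ K := by
            rw [hmK]; intro h; exact hue.1 (hleaf b h a heG.symm).symm
          have h2 : ({a, b} : Finset V) ⊆ f s(a, b) := by
            intro x hx
            rw [Finset.mem_insert, Finset.mem_singleton] at hx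
            rcases hx with rfl | rfl <;> simp [hf, ha, hb]
          have := Finset.card_le_card h2
          rw [Finset.card_pair heG.ne] at this
          omega
    rw [Finset.sum_add_distrib, ← Finset.card_filter] at hlow
    have hone : (M.filter (u ∈ ·)).card ≤ 1 := by
      rw [Finset.card_le_one]
      intro e he e' he'
      rw [Finset.mem_filter] at he he'
      by_contra hne
      exact hMd e he.1 e' he'.1 hne u he.2 he'.2
    have hsub : M.biUnion f ⊆ K := by
      intro x hx
      rw [Finset.mem_biUnion] at hx
      obtain ⟨e, -, hx⟩ := hx
      exact (Finset.mem_filter.1 hx).1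
    have hun : (K \ M.biUnion f).card ≤ 1 := by
      rw [Finset.card_le_one]
      intro a ha b hb
      rw [Finset.mem_sdiff] at ha hb
      by_contra hne
      obtain ⟨e, he, v, hv, hve⟩ := hmax s(a, b) (hclique a ha.1 b hb.1 hne)
      rw [Sym2.mem_iff] at hv
      rcases hv with rfl | rfl
      · exact ha.2 (Finset.mem_biUnion.2 ⟨e, he, Finset.mem_filter.2 ⟨ha.1, hve⟩⟩)
      · exact hb.2 (Finset.mem_biUnion.2 ⟨e, he, Finset.mem_filter.2 ⟨hb.1, hve⟩⟩)
    have hs := Finset.card_sdiff_add_card_eq_card hsub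
    obtain ⟨k, hk⟩ := heven
    omega
  refine ⟨⟨fun M₁ M₂ h₁ h₂ => (hmain M₁ h₁).trans (hmain M₂ h₂).symm, ?_⟩, hmain⟩
  refine ⟨↑K, (↑K)ᶜ, disjoint_compl_right, Set.union_compl_self _, ?_, ?_⟩
  · intro a ha b hb hab
    exact hclique a ha b hb hab
  · intro a ha b hb hab hadj
    have ha' : G.degree a = 1 := by
      by_contra h; exact ha ((hmK a).2 h)
    have := hleaf a ha' b hadj
    subst this
    exact hb huK
end

section
/- Let G be a finite simple undirected graph on n ≥ 4 vertices with no isolated vertices, let r be the number of vertices of G of degree 1 and p the number of vertices of degree n − 1. If p = 0, r ≥ 2, n − r is even, and there exist non-adjacent vertices x and y with d(x) = n − 2 and d(y) = n − r − 2 such that every vertex other than x and y has degree 1 or n − r − 1, then G is an equimatchable split graph; moreover, every maximal matching of G has exactly (n − r)/2 edges. -/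
open Finset

variable {V : Type*}

theorem stmt_13 {V : Type*} [Fintype V] [DecidableEq V]
    (G : SimpleGraph V) [DecidableRel G.Adj]
    (n : ℕ) (hn : Fintype.card V = n) (hn4 : 4 ≤ n)
    (hNoIso : ∀ v : V, ∃ w : V, G.Adj v w)
    (r p : ℕ)
    (hr : r = (Finset.univ.filter fun v : V => G.degree v = 1).card)
    (hp : p = (Finset.univ.filter fun v : V => G.degree v = n - 1).card)
    (hp0 : p = 0) (hr2 : 2 ≤ r) (heven : Even (n - r))
    (x y : V) (hxy : x ≠ y) (hadj : ¬ G.Adj x y)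
    (hdx : G.degree x = n - 2) (hdy : G.degree y = n - r - 2)
    (hdeg : ∀ v : V, v ≠ x → v ≠ y → (G.degree v = 1 ∨ G.degree v = n - r - 1)) :
    (Equimatchable G ∧ IsSplitGraph G) ∧
      ∀ M : Finset (Sym2 V), IsMaximalMatching G M → M.card = (n - r) / 2 := by
  classical
  have hxA : ∀ v, v ≠ x → v ≠ y → G.Adj x v := by
    have hsub : G.neighborFinset x ⊆ (univ.erase x).erase y := by
      intro v hv
      rw [SimpleGraph.mem_neighborFinset] at hv
      have h1 : v ≠ x := fun h => by subst h; exact G.loopless.irrefl _ hv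
      have h2 : v ≠ y := fun h => by subst h; exact hadj hv
      simp [h1, h2]
    have hc : ((univ.erase x).erase y : Finset V).card = n - 2 := by
      rw [card_erase_of_mem (by simp [hxy.symm]), card_erase_of_mem (mem_univ _), card_univ, hn]
      omega
    have heq := eq_of_subset_of_card_le hsub
      (by rw [hc, SimpleGraph.card_neighborFinset_eq_degree, hdx])
    intro v h1 h2
    rw [← SimpleGraph.mem_neighborFinset, heq]
    simp [h1, h2]
  have hypos : 0 < G.degree y := by
    rw [SimpleGraph.degree_pos_iff_exists_adj]
    exact hNoIso y
  obtain ⟨k, hk⟩ := heven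
  have hk4 : 4 ≤ n - r := by omega
  have hy1 : G.degree y ≠ 1 := by omega
  have hx1 : G.degree x ≠ 1 := by omega
  have hleaf : ∀ l, G.degree l = 1 → ∀ w, G.Adj l w → w = x := by
    intro l hl w hw
    have hlx : l ≠ x := fun h => hx1 (h ▸ hl)
    have hly : l ≠ y := fun h => hy1 (h ▸ hl)
    have h1 := hxA l hlx hly
    rw [← SimpleGraph.card_neighborFinset_eq_degree, card_eq_one] at hl
    obtain ⟨a, ha⟩ := hl
    have e1 : w ∈ G.neighborFinset l := by simpa using hw
    have e2 : x ∈ G.neighborFinset l := by simpa using h1.symm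
    rw [ha, mem_singleton] at e1 e2
    rw [e1, e2]
  set L : Finset V := univ.filter fun v : V => G.degree v = 1 with hL
  have hNc : Lᶜ.card = n - r := by rw [card_compl, hn, ← hr]
  have hxL : x ∈ Lᶜ := by simp [hL, hx1]
  have hyL : y ∈ Lᶜ := by simp [hL, hy1]
  -- generic core vertices
  have hcore : ∀ v, v ∉ L → v ≠ x → v ≠ y → ∀ w, w ∉ L → w ≠ v → G.Adj v w := by
    intro v hv hvx hvy
    have hd : G.degree v = n - r - 1 := by
      rcases hdeg v hvx hvy with h | h
      · exact absurd (by simp [hL, h]) hv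
      · exact h
    have hsub : G.neighborFinset v ⊆ Lᶜ.erase v := by
      intro w hw
      rw [SimpleGraph.mem_neighborFinset] at hw
      have h1 : w ≠ v := hw.ne'
      have h2 : w ∉ L := by
        intro h
        exact hvx (hleaf w (by simpa [hL] using h) v hw.symm)
      simp [h1, h2]
    have heq := eq_of_subset_of_card_le hsub
      (by rw [card_erase_of_mem (by simp [hv]), hNc,
            SimpleGraph.card_neighborFinset_eq_degree, hd])
    intro w h1 h2
    rw [← SimpleGraph.mem_neighborFinset, heq]
    simp [h1, h2]
  have hclq : ∀ v w, v ∉ L → w ∉ L → v ≠ x → w ≠ x → v ≠ w → G.Adj v w := by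
    intro v w hv hw hvx hwx hvw
    by_cases hvy : v = y
    · have hwy : w ≠ y := fun h => hvw (hvy.trans h.symm)
      exact (hcore w hw hwx hwy v hv hvw).symm
    · exact hcore v hv hvx hvy w hw hvw.symm
  have hsplit : IsSplitGraph G := by
    refine ⟨{v | v ∉ L ∧ v ≠ y}, {v | v ∈ L ∨ v = y}, ?_, ?_, ?_, ?_⟩
    · rw [Set.disjoint_left]
      rintro a ⟨h1, h2⟩ (h | h)
      · exact h1 h
      · exact h2 h
    · ext a
      simp only [Set.mem_union, Set.mem_ofPred_eq, Set.mem_univ, iff_true]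
      tauto
    · rintro a ⟨ha, hay⟩ b ⟨hb, hby⟩ hab
      by_cases hax : a = x
      · subst hax
        exact hxA b hab.symm hby
      · exact hcore a ha hax hay b hb hab.symm
    · have key : ∀ a b, a ∈ L → (b ∈ L ∨ b = y) → ¬ G.Adj a b := by
        intro a b ha hb h
        have hbx := hleaf a (by simpa [hL] using ha) b h
        rcases hb with hb | hb
        · exact (mem_compl.1 hxL) (hbx ▸ hb)
        · exact hxy (hbx.symm.trans hb)
      rintro a (ha | ha) b hb hab
      · exact key a b ha hb
      · rcases hb with hb | hb
        · exact fun h => key b a hb (Or.inr ha) h.symm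
        · exact absurd (ha.trans hb.symm) hab
  have hcard : ∀ M : Finset (Sym2 V), IsMaximalMatching G M → M.card = (n - r) / 2 := by
    rintro M ⟨⟨hM1, hM2⟩, hmax⟩
    set S : Finset V := M.biUnion fun e => e.toFinset with hS
    have hmemS : ∀ v, v ∈ S ↔ ∃ e ∈ M, v ∈ e := by
      intro v; simp [hS]
    have hSc : S.card = M.card * 2 := by
      rw [hS, card_biUnion]
      · apply sum_const_nat
        intro e he
        exact Sym2.card_toFinset_of_not_isDiag e (G.not_isDiag_of_mem_edgeSet (hM1 he))
      · intro e he f hf hef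
        rw [Function.onFun, Finset.disjoint_left]
        intro v hv hv2
        rw [Sym2.mem_toFinset] at hv hv2
        exact hM2 e he f hf hef v hv hv2
    have hlM : ∀ l ∈ L, ∀ f ∈ M, l ∈ f → f = s(l, x) := by
      intro l hl f hf hlf
      obtain ⟨w, rfl⟩ := hlf
      have := hleaf l (by simpa [hL] using hl) w (by simpa using hM1 hf)
      rw [this]
    have hxS : x ∈ S := by
      have : 0 < L.card := by omega
      obtain ⟨l, hl⟩ := card_pos.1 this
      have hlx : l ≠ x := fun h => (mem_compl.1 hxL) (h ▸ hl)
      have hly : l ≠ y := fun h => (mem_compl.1 hyL) (h ▸ hl)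
      obtain ⟨f, hf, v, hv, hvf⟩ := hmax s(x, l) (by simpa using hxA l hlx hly)
      rw [hmemS]
      refine ⟨f, hf, ?_⟩
      rcases Sym2.mem_iff.1 hv with h | h
      · exact h ▸ hvf
      · subst h
        rw [hlM v hl f hf hvf]
        simp
    have hSL : (S ∩ L).card ≤ 1 := by
      rw [card_le_one]
      intro a ha b hb
      rw [mem_inter, hmemS] at ha hb
      obtain ⟨⟨e, he, hae⟩, haL⟩ := ha
      obtain ⟨⟨f, hf, hbf⟩, hbL⟩ := hb
      have h1 := hlM a haL e he hae
      have h2 := hlM b hbL f hf hbf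
      have hef : e = f := by
        by_contra hne
        exact hM2 e he f hf hne x (by simp [h1]) (by simp [h2])
      have h3 : s(a, x) = s(b, x) := h1.symm.trans (hef.trans h2)
      exact Sym2.congr_left.1 h3
    have hCS : (Lᶜ \ S).card ≤ 1 := by
      rw [card_le_one]
      intro a ha b hb
      rw [mem_sdiff, mem_compl] at ha hb
      by_contra hab
      have hA := hclq a b ha.1 hb.1 (fun h => ha.2 (h ▸ hxS)) (fun h => hb.2 (h ▸ hxS)) hab
      obtain ⟨f, hf, v, hv, hvf⟩ := hmax s(a, b) (by simpa using hA)
      have hvS := (hmemS v).2 ⟨f, hf, hvf⟩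
      rcases Sym2.mem_iff.1 hv with h | h
      · exact ha.2 (h ▸ hvS)
      · exact hb.2 (h ▸ hvS)
    have e1 := card_sdiff_add_card_inter Lᶜ S
    have e2 := card_sdiff_add_card_inter S L
    have e3 : S \ L = Lᶜ ∩ S := by ext; simp [and_comm]
    rw [e3] at e2
    omega
  exact ⟨⟨fun M₁ M₂ h1 h2 => (hcard M₁ h1).trans (hcard M₂ h2).symm, hsplit⟩, hcard⟩
end

section
/- Let G be a finite simple undirected graph on n ≥ 4 vertices with no isolated vertices, and let p be the number of vertices of G of degree n − 1. If n is odd and there exist two vertices x and y with d(x) + d(y) = p + n − 2 such that every vertex other than x and y has degree n − 1 or n − 2, then G is an equimatchable split graph. -/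
open Finset

variable {V : Type*}

theorem aux_card_s14 {V : Type*} [Fintype V] [DecidableEq V] (G : SimpleGraph V)
    (hodd : Odd (Fintype.card V))
    (h3 : ∀ a b c : V, a ≠ b → a ≠ c → b ≠ c → ¬ G.Adj a b → ¬ G.Adj a c → ¬ G.Adj b c → False)
    (M : Finset (Sym2 V)) (hM : IsMaximalMatching G M) :
    2 * M.card + 1 = Fintype.card V := by
  obtain ⟨⟨hE, hD⟩, hmax⟩ := hM
  set C := M.biUnion (fun e => e.toFinset) with hC
  have hCc : C.card = 2 * M.card := by
    rw [hC, Finset.card_biUnion]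
    · rw [Finset.sum_const_nat (m := 2), mul_comm]
      intro e he
      exact Sym2.card_toFinset_of_not_isDiag _ (G.not_isDiag_of_mem_edgeSet (hE he))
    · intro e he f hf hef
      rw [Function.onFun, Finset.disjoint_left]
      intro v hv hv'
      rw [Sym2.mem_toFinset] at hv hv'
      exact hD e he f hf hef v hv hv'
  have hCn : C.card + Cᶜ.card = Fintype.card V := Finset.card_add_card_compl C
  have hind : ∀ a b : V, a ∈ Cᶜ → b ∈ Cᶜ → ¬ G.Adj a b := by
    intro a b ha hb hab
    obtain ⟨f, hf, v, hv, hvf⟩ := hmax s(a, b) hab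
    have hvC : v ∈ C := Finset.mem_biUnion.2 ⟨f, hf, Sym2.mem_toFinset.2 hvf⟩
    rcases Sym2.mem_iff.1 hv with rfl | rfl
    · exact (Finset.mem_compl.1 ha) hvC
    · exact (Finset.mem_compl.1 hb) hvC
  have hle : Cᶜ.card ≤ 2 := by
    by_contra! h
    obtain ⟨a, b, c, ha, hb, hc, hab, hac, hbc⟩ := Finset.two_lt_card_iff.1 h
    exact h3 a b c hab hac hbc (hind _ _ ha hb) (hind _ _ ha hc) (hind _ _ hb hc)
  obtain ⟨k, hk⟩ := hodd
  omega


theorem stmt_14 {V : Type*} [Fintype V] [DecidableEq V]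
    (G : SimpleGraph V) [DecidableRel G.Adj]
    (n : ℕ) (hn : Fintype.card V = n) (hn4 : 4 ≤ n)
    (hNoIso : ∀ v : V, ∃ w : V, G.Adj v w)
    (p : ℕ)
    (hp : p = (Finset.univ.filter fun v : V => G.degree v = n - 1).card)
    (hodd : Odd n)
    (x y : V) (hxy : x ≠ y) (hsum : G.degree x + G.degree y = p + n - 2)
    (hdeg : ∀ v : V, v ≠ x → v ≠ y → (G.degree v = n - 1 ∨ G.degree v = n - 2)) :
    Equimatchable G ∧ IsSplitGraph G := by
  have hcd : ∀ v, Gᶜ.degree v = n - 1 - G.degree v := by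
    intro v; rw [SimpleGraph.degree_compl, hn]
  have hlt : ∀ v, G.degree v < n := by
    intro v; rw [← hn]; exact G.degree_lt_card_verts v
  have hone : ∀ v a b, v ≠ x → v ≠ y → Gᶜ.Adj v a → Gᶜ.Adj v b → a = b := by
    intro v a b hvx hvy ha hb
    have h1 : Gᶜ.degree v ≤ 1 := by
      rw [hcd]; have := hdeg v hvx hvy; omega
    rw [← SimpleGraph.card_neighborFinset_eq_degree] at h1
    exact Finset.card_le_one.1 h1 a (by simpa using ha) b (by simpa using hb)
  constructor
  · have key := aux_card_s14 G (by rw [hn]; exact hodd) (by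
      intro a b c hab hac hbc nab nac nbc
      have A : Gᶜ.Adj a b := ⟨hab, nab⟩
      have B : Gᶜ.Adj a c := ⟨hac, nac⟩
      have D : Gᶜ.Adj b c := ⟨hbc, nbc⟩
      by_cases ha : a ≠ x ∧ a ≠ y
      · exact hbc (hone a b c ha.1 ha.2 A B)
      by_cases hb : b ≠ x ∧ b ≠ y
      · exact hac (hone b a c hb.1 hb.2 A.symm D)
      by_cases hc : c ≠ x ∧ c ≠ y
      · exact hab (hone c a b hc.1 hc.2 B.symm D.symm)
      grind)
    intro M₁ M₂ h₁ h₂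
    have := key M₁ h₁
    have := key M₂ h₂
    omega
  · set S := Finset.univ.filter (fun v : V => ¬ G.degree v = n - 1) with hS
    have hSc : p + S.card = n := by
      rw [hp, hS, ← hn]
      exact Finset.card_filter_add_card_filter_not (s := Finset.univ) _
    have memS : ∀ a b, Gᶜ.Adj a b → a ∈ S := by
      intro a b hab
      have h0 : 0 < Gᶜ.degree a := (Gᶜ.degree_pos_iff_exists_adj a).2 ⟨b, hab⟩
      rw [hcd] at h0
      simp only [hS, Finset.mem_filter, Finset.mem_univ, true_and]
      omega
    have hsum' : Gᶜ.degree x + Gᶜ.degree y = S.card := by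
      rw [hcd, hcd]; have := hlt x; have := hlt y; omega
    set A := (Gᶜ.neighborFinset x).erase y with hA
    set B := (Gᶜ.neighborFinset y).erase x with hB
    have hdis : Disjoint A B := by
      rw [Finset.disjoint_left]
      intro v hv hv'
      simp only [hA, hB, Finset.mem_erase, SimpleGraph.mem_neighborFinset] at hv hv'
      exact hxy (hone v x y hv'.1 hv.1 hv.2.symm hv'.2.symm)
    have hsub : A ∪ B ⊆ (S.erase x).erase y := by
      intro v hv
      simp only [hA, hB, Finset.mem_union, Finset.mem_erase,
        SimpleGraph.mem_neighborFinset] at hv ⊢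
      rcases hv with hv | hv
      · exact ⟨hv.1, hv.2.ne', memS _ _ hv.2.symm⟩
      · exact ⟨hv.2.ne', hv.1, memS _ _ hv.2.symm⟩
    have hAB : (A ∪ B).card = A.card + B.card := Finset.card_union_of_disjoint hdis
    have hcx := Gᶜ.card_neighborFinset_eq_degree x
    have hcy := Gᶜ.card_neighborFinset_eq_degree y
    have hle := Finset.card_le_card hsub
    by_cases hadj : Gᶜ.Adj x y
    · have hxS := memS _ _ hadj
      have hyS := memS _ _ hadj.symm
      have a1 : A.card + 1 = _ := Finset.card_erase_add_one
        ((Gᶜ.mem_neighborFinset x y).2 hadj)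
      have b1 : B.card + 1 = _ := Finset.card_erase_add_one
        ((Gᶜ.mem_neighborFinset y x).2 hadj.symm)
      have s1 := Finset.card_erase_add_one hxS
      have s2 := Finset.card_erase_add_one (Finset.mem_erase.2 ⟨hxy.symm, hyS⟩)
      have heq : A ∪ B = (S.erase x).erase y :=
        Finset.eq_of_subset_of_card_le hsub (by omega)
      refine ⟨({x, y} : Set V)ᶜ, {x, y}, disjoint_compl_left, Set.compl_union_self _, ?_, ?_⟩
      · intro u hu v hv huv
        by_contra hn'
        have huv' : Gᶜ.Adj u v := ⟨huv, hn'⟩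
        simp only [Set.mem_compl_iff, Set.mem_insert_iff, Set.mem_singleton_iff, not_or] at hu hv
        have huS : u ∈ A ∪ B := by
          rw [heq]
          exact Finset.mem_erase.2 ⟨hu.2, Finset.mem_erase.2 ⟨hu.1, memS _ _ huv'⟩⟩
        simp only [hA, hB, Finset.mem_union, Finset.mem_erase,
          SimpleGraph.mem_neighborFinset] at huS
        rcases huS with h | h
        · exact hv.1 (hone u v x hu.1 hu.2 huv' h.2.symm)
        · exact hv.2 (hone u v y hu.1 hu.2 huv' h.2.symm)
      · have h1 : ¬ G.Adj x y := hadj.2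
        have h2 : ¬ G.Adj y x := fun h => h1 h.symm
        intro a ha b hb hab
        simp only [Set.mem_insert_iff, Set.mem_singleton_iff] at ha hb
        grind
    · have a1 : A = Gᶜ.neighborFinset x :=
        Finset.erase_eq_of_notMem (by simpa [-SimpleGraph.compl_adj] using hadj)
      have b1 : B = Gᶜ.neighborFinset y :=
        Finset.erase_eq_of_notMem (by
          simpa [-SimpleGraph.compl_adj] using fun h : Gᶜ.Adj y x => hadj h.symm)
      rw [a1, b1, hcx, hcy] at hAB
      have heq : (S.erase x).erase y = S :=
        Finset.eq_of_subset_of_card_le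
          ((Finset.erase_subset _ _).trans (Finset.erase_subset _ _)) (by rw [a1, b1] at hle; omega)
      have hx0 : x ∉ S := by rw [← heq]; simp
      have hy0 : y ∉ S := by rw [← heq]; simp
      have dx : Gᶜ.degree x = 0 := by
        by_contra h
        obtain ⟨w, hw⟩ := (Gᶜ.degree_pos_iff_exists_adj x).1 (Nat.pos_of_ne_zero h)
        exact hx0 (memS _ _ hw)
      have dy : Gᶜ.degree y = 0 := by
        by_contra h
        obtain ⟨w, hw⟩ := (Gᶜ.degree_pos_iff_exists_adj y).1 (Nat.pos_of_ne_zero h)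
        exact hy0 (memS _ _ hw)
      have hS0 : S = ∅ := Finset.card_eq_zero.1 (by omega)
      refine ⟨Set.univ, ∅, by simp, by simp, ?_, by intro a ha; simp at ha⟩
      intro u _ v _ huv
      by_contra hn'
      have := memS u v ⟨huv, hn'⟩
      rw [hS0] at this
      simp at this
end
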